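/- arXiv:math/0010135 — 4 statements merged into one kernel-verified Lean document; each statement's English description precedes it below -/
import Mathlib

section
/- de Bruijn's identity: for integrable functions F_0,...,F_{2n-1} and G_0,...,G_{2n-1} on ℝ, (1/n!) ∫_{ℝ^n} det( F_i(y_1), G_i(y_1), ..., F_i(y_n), G_i(y_n) )_{0≤i≤2n-1} dy_1...dy_n = det^{1/2} ( ∫_ℝ (G_i(y)F_j(y) − F_i(y)G_j(y)) dy )_{0≤i,j≤2n-1}, i.e., the square of the left side equals the determinant of the 2n×2n skew-symmetric matrix of pairwise integrals. -/
open MeasureTheory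

/-!
Expanding the determinant over permutations `σ` and integrating each factor gives
`∑ σ, ε σ * ∏ k, a (σ (k, 0)) (σ (k, 1))` with `a i j = ∫ F i * G j`, which is `n!` times the
Pfaffian of `a - aᵀ`. Its square is therefore `n! ^ 2 * det (a - aᵀ)`.

For the square of the Pfaffian, the same expansion over a finite set in place of `ℝ` shows that the
sum is multiplied by `det M` when `a` becomes `M * a * Mᵀ`. This reduces a nonsingular alternating
matrix over a field to the standard symplectic matrix, and a generic matrix `a` over `ℤ` carries the
resulting polynomial identity to every commutative ring.
-/

namespace DeBruijn

open Equiv Matrix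
open scoped Kronecker

theorem sub_transpose_apply_eq_sum_perm {κ R : Type*} [CommRing R]
    (a : Matrix κ κ R) (v : Fin 2 → κ) :
    (a - aᵀ) (v 0) (v 1) =
      ∑ p : Perm (Fin 2), ((Perm.sign p : ℤ) : R) * a (v (p 0)) (v (p 1)) := by
  have huniv : (Finset.univ : Finset (Perm (Fin 2))) = {1, swap 0 1} := by decide
  rw [huniv, Finset.sum_pair (by decide)]
  simp [sub_eq_add_neg]

theorem sign_prodCongr_refl_fin_two {ι : Type*} [Fintype ι] [DecidableEq ι]
    (τ : Perm ι) :
    Perm.sign (prodCongr τ (Equiv.refl (Fin 2))) = 1 := by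
  have h : prodCongr τ (Equiv.refl (Fin 2)) = prodCongrLeft fun _ => τ := by
    ext <;> rfl
  simp [h, Perm.sign_prodCongrLeft]

theorem exists_prodCongr_refl_eq {ι : Type*} [Finite ι] {σ : Perm (ι × Fin 2)}
    (hfst : ∀ k, (σ (k, 0)).1 = (σ (k, 1)).1) (hsnd : ∀ k b, (σ (k, b)).2 = b) :
    ∃ τ : Perm ι, prodCongr τ (Equiv.refl (Fin 2)) = σ := by
  have hinj : Function.Injective fun k => (σ (k, 0)).1 := fun k l hkl =>
    congrArg Prod.fst (σ.injective (Prod.ext hkl ((hsnd k 0).trans (hsnd l 0).symm)))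
  refine ⟨Equiv.ofBijective _ (Finite.injective_iff_bijective.1 hinj), Equiv.ext fun ⟨k, b⟩ => ?_⟩
  fin_cases b
  · exact Prod.ext rfl (hsnd k 0).symm
  · exact Prod.ext (hfst k) (hsnd k 1).symm

section PfaffianSum

variable {ι R : Type*} [Fintype ι] [DecidableEq ι] [CommRing R]

/-- `n!` times the Pfaffian of `a - aᵀ`, where `n = card ι`, written as a signed sum over all
orderings of the rows of `a`, so that it makes sense over every commutative ring. Rows are
indexed by `ι × Fin 2`, the pairs being the fibres of `Prod.fst`. -/
def pfaffianSum (a : Matrix (ι × Fin 2) (ι × Fin 2) R) : R :=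
  ∑ σ : Perm (ι × Fin 2), ((Perm.sign σ : ℤ) : R) * ∏ k, a (σ (k, 0)) (σ (k, 1))

theorem map_pfaffianSum {S : Type*} [CommRing S] (f : R →+* S)
    (a : Matrix (ι × Fin 2) (ι × Fin 2) R) : f (pfaffianSum a) = pfaffianSum (a.map f) := by
  simp [pfaffianSum]

theorem pfaffianSum_sub_transpose (a : Matrix (ι × Fin 2) (ι × Fin 2) R) :
    pfaffianSum (a - aᵀ) = 2 ^ Fintype.card ι * pfaffianSum a := by
  have hswap (s : ι → Perm (Fin 2)) :
      ∑ σ : Perm (ι × Fin 2), ((Perm.sign σ : ℤ) : R) *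
        ∏ k, ((Perm.sign (s k) : ℤ) : R) * a (σ (k, s k 0)) (σ (k, s k 1)) = pfaffianSum a := by
    refine Fintype.sum_equiv (Equiv.mulRight (prodCongrRight s)) _ _ fun σ => ?_
    simp [Perm.sign_mul, Perm.sign_prodCongrRight, Finset.prod_mul_distrib, mul_assoc]
  calc pfaffianSum (a - aᵀ)
      = ∑ σ : Perm (ι × Fin 2), ((Perm.sign σ : ℤ) : R) * ∏ k, ∑ p : Perm (Fin 2),
          ((Perm.sign p : ℤ) : R) * a (σ (k, p 0)) (σ (k, p 1)) := by
        unfold pfaffianSum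
        congr! with σ _ k _
        exact sub_transpose_apply_eq_sum_perm a fun b => σ (k, b)
    _ = ∑ _s : ι → Perm (Fin 2), pfaffianSum a := by
        simp_rw [Finset.prod_univ_sum, Finset.mul_sum]
        rw [Finset.sum_comm, Fintype.piFinset_univ]
        exact Finset.sum_congr rfl fun s _ => hswap s
    _ = 2 ^ Fintype.card ι * pfaffianSum a := by
        simp [Fintype.card_perm]

end PfaffianSum

section Interleave

variable {ι κ α R : Type*}

/-- The matrix with columns `F(y k), G(y k)` for `k : ι`: column `(k, 0)` is column `y k` of `F`
and column `(k, 1)` is column `y k` of `G`. -/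
def interleave (F G : Matrix κ α R) (y : ι → α) : Matrix κ (ι × Fin 2) R :=
  of fun i c => if c.2 = 0 then F i (y c.1) else G i (y c.1)

theorem interleave_mul {κ' : Type*} [Fintype κ] [NonUnitalNonAssocSemiring R]
    (M : Matrix κ' κ R) (F G : Matrix κ α R) (y : ι → α) :
    interleave (M * F) (M * G) y = M * interleave F G y := by
  ext i ⟨k, b⟩
  fin_cases b <;> simp [interleave, Matrix.mul_apply]

variable [Fintype ι] [DecidableEq ι]

theorem det_interleave [CommRing R] (F G : Matrix (ι × Fin 2) α R) (y : ι → α) :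
    (interleave F G y).det = ∑ σ : Perm (ι × Fin 2), ((Perm.sign σ : ℤ) : R) *
      ∏ k, F (σ (k, 0)) (y k) * G (σ (k, 1)) (y k) := by
  simp [det_apply', interleave, Fintype.prod_prod_type]

theorem pfaffianSum_mul_transpose [CommRing R] [Fintype α] (F G : Matrix (ι × Fin 2) α R) :
    pfaffianSum (F * Gᵀ) = ∑ y : ι → α, (interleave F G y).det := by
  simp_rw [det_interleave]
  rw [Finset.sum_comm]
  simp [pfaffianSum, Matrix.mul_apply, Finset.prod_univ_sum, Finset.mul_sum]

theorem pfaffianSum_mul_mul_transpose [CommRing R] (M a : Matrix (ι × Fin 2) (ι × Fin 2) R) :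
    pfaffianSum (M * a * Mᵀ) = M.det * pfaffianSum a := by
  calc pfaffianSum (M * a * Mᵀ)
      = pfaffianSum (M * 1 * (M * aᵀ)ᵀ) := by simp [Matrix.mul_assoc]
    _ = ∑ y : ι → ι × Fin 2, M.det * (interleave 1 aᵀ y).det := by
        simp_rw [pfaffianSum_mul_transpose, interleave_mul, det_mul]
    _ = M.det * pfaffianSum (1 * aᵀᵀ) := by rw [← Finset.mul_sum, pfaffianSum_mul_transpose]
    _ = M.det * pfaffianSum a := by simp

theorem integral_det_interleave {𝕜 : Type*} [RCLike 𝕜] [MeasurableSpace α] {μ : Measure α}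
    [SigmaFinite μ] (F G : Matrix (ι × Fin 2) α 𝕜)
    (hFG : ∀ i j, Integrable (fun t => F i t * G j t) μ) :
    ∫ y : ι → α, (interleave F G y).det ∂Measure.pi (fun _ => μ) =
      pfaffianSum (of fun i j => ∫ t, F i t * G j t ∂μ) := by
  simp_rw [det_interleave]
  rw [integral_finsetSum _ fun σ _ =>
    (Integrable.fintype_prod (f := fun k t => F (σ (k, 0)) t * G (σ (k, 1)) t)
      fun k => hFG _ _).const_mul _]
  refine Finset.sum_congr rfl fun σ _ => ?_
  rw [integral_const_mul,
    integral_fintype_prod_eq_prod fun k t => F (σ (k, 0)) t * G (σ (k, 1)) t]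
  rfl

end Interleave

section StdPairing

variable {ι R : Type*} [DecidableEq ι] [CommRing R]

variable (ι R) in
/-- The upper half of the standard symplectic matrix: `stdPairing ι R - (stdPairing ι R)ᵀ` is block
diagonal with blocks `!![0, 1; -1, 0]` indexed by `ι`. -/
def stdPairing : Matrix (ι × Fin 2) (ι × Fin 2) R :=
  1 ⊗ₖ !![0, 1; 0, 0]

theorem stdPairing_apply (i j : ι × Fin 2) :
    stdPairing ι R i j = if i.1 = j.1 ∧ i.2 = 0 ∧ j.2 = 1 then 1 else 0 := by
  obtain ⟨i, b⟩ := i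
  obtain ⟨j, c⟩ := j
  fin_cases b <;> fin_cases c <;> simp [stdPairing, Matrix.one_apply]

variable [Fintype ι]

theorem det_stdPairing_sub_transpose : (stdPairing ι R - (stdPairing ι R)ᵀ).det = 1 := by
  have hblock : stdPairing ι R - (stdPairing ι R)ᵀ = 1 ⊗ₖ !![0, 1; -1, 0] := by
    ext ⟨i, b⟩ ⟨j, c⟩
    fin_cases b <;> fin_cases c <;> simp [stdPairing, Matrix.one_apply, eq_comm]
  simp [hblock, det_kronecker]

theorem pfaffianSum_stdPairing :
    pfaffianSum (stdPairing ι R) = (Fintype.card ι).factorial := by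
  have hinj : Function.Injective fun τ : Perm ι => prodCongr τ (Equiv.refl (Fin 2)) :=
    fun τ τ' h => Equiv.ext fun k => congrArg (fun e => (e (k, 0)).1) h
  unfold pfaffianSum
  rw [← Fintype.sum_of_injective _ hinj (fun _ => (1 : R))]
  · simp [Fintype.card_perm]
  · intro σ hσ
    by_contra hne
    have hk (k : ι) : (σ (k, 0)).1 = (σ (k, 1)).1 ∧ (σ (k, 0)).2 = 0 ∧ (σ (k, 1)).2 = 1 := by
      by_contra hk
      refine hne (mul_eq_zero_of_right _ (Finset.prod_eq_zero (Finset.mem_univ k) ?_))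
      rw [stdPairing_apply, if_neg hk]
    refine hσ (exists_prodCongr_refl_eq (fun k => (hk k).1) fun k b => ?_)
    fin_cases b
    exacts [(hk k).2.1, (hk k).2.2]
  · intro τ
    simp [sign_prodCongr_refl_fin_two, stdPairing_apply]

end StdPairing

section Symplectic

variable {K V : Type*} [Field K] [AddCommGroup V] [Module K V]

/-- The vectors `e i` and `f i` form the standard pairs of a symplectic basis of their span. -/
structure IsSymplecticFamily {ι : Type*} [DecidableEq ι] (B : LinearMap.BilinForm K V)
    (e f : ι → V) : Prop where
  left_left : ∀ i j, B (e i) (e j) = 0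
  right_right : ∀ i j, B (f i) (f j) = 0
  left_right : ∀ i j, B (e i) (f j) = if i = j then 1 else 0

theorem exists_ne_zero_orthogonal {ι : Type*} [Fintype ι] [FiniteDimensional K V]
    (B : LinearMap.BilinForm K V) (e f : ι → V)
    (hcard : 2 * Fintype.card ι < Module.finrank K V) :
    ∃ w ≠ 0, (∀ i, B (e i) w = 0) ∧ ∀ i, B (f i) w = 0 := by
  let L : V →ₗ[K] (ι ⊕ ι → K) := LinearMap.pi (Sum.elim (fun i => B (e i)) fun i => B (f i))
  have hL : LinearMap.ker L ≠ ⊥ :=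
    LinearMap.ker_ne_bot_of_finrank_lt (by simpa [two_mul] using hcard)
  obtain ⟨w, hw, hw0⟩ := (Submodule.ne_bot_iff _).1 hL
  exact ⟨w, hw0, fun i => congrFun hw (Sum.inl i), fun i => congrFun hw (Sum.inr i)⟩

variable {B : LinearMap.BilinForm K V}

namespace IsSymplecticFamily

variable {ι : Type*} [DecidableEq ι] {e f : ι → V}

theorem right_left (h : IsSymplecticFamily B e f) (hB : B.IsAlt) (i j : ι) :
    B (f i) (e j) = if i = j then -1 else 0 := by
  rw [← hB.neg_eq, h.left_right]
  simp [apply_ite, eq_comm]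

theorem orthogonal_sub_sum [Fintype ι] (h : IsSymplecticFamily B e f) (hB : B.IsAlt) (u : V) :
    let z := u - ∑ i, (B (e i) u • f i - B (f i) u • e i)
    (∀ j, B (e j) z = 0) ∧ ∀ j, B (f j) z = 0 := by
  constructor <;> intro j <;>
    simp [h.left_left, h.left_right, h.right_right, h.right_left hB]

theorem exists_cons {k : ℕ} {e f : Fin k → V} [FiniteDimensional K V]
    (h : IsSymplecticFamily B e f) (hB : B.IsAlt) (hsep : B.SeparatingLeft)
    (hk : 2 * k < Module.finrank K V) :
    ∃ w z, IsSymplecticFamily B (Fin.cons w e : Fin (k + 1) → V) (Fin.cons z f) := by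
  obtain ⟨w, hw0, hew, hfw⟩ := exists_ne_zero_orthogonal B e f (by simpa using hk)
  obtain ⟨u, hu⟩ : ∃ u, B w u = 1 := by
    obtain ⟨v, hv⟩ : ∃ v, B w v ≠ 0 := by
      by_contra! hw
      exact hw0 (hsep w hw)
    exact ⟨(B w v)⁻¹ • v, by simp [hv]⟩
  have hwe (i) : B w (e i) = 0 := hB.eq_iff.1 (hew i)
  have hwf (i) : B w (f i) = 0 := hB.eq_iff.1 (hfw i)
  obtain ⟨hez, hfz⟩ := h.orthogonal_sub_sum hB u
  set z := u - ∑ i, (B (e i) u • f i - B (f i) u • e i) with hz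
  have hwz : B w z = 1 := by simp [hz, hu, hwe, hwf]
  have hzf (i) : B z (f i) = 0 := hB.eq_iff.1 (hfz i)
  refine ⟨w, z, ?_, ?_, ?_⟩ <;> intro i j <;>
    cases i using Fin.cases <;> cases j using Fin.cases <;>
    simp [hB.self_eq_zero, hew, hwe, hwf, hez, hfz, hzf, hwz, h.left_left, h.right_right,
      h.left_right, (Fin.succ_ne_zero _).symm]

end IsSymplecticFamily

theorem exists_isSymplecticFamily [FiniteDimensional K V] (hB : B.IsAlt) (hsep : B.SeparatingLeft)
    (k : ℕ) (hk : 2 * k ≤ Module.finrank K V) : ∃ e f : Fin k → V, IsSymplecticFamily B e f := by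
  induction k with
  | zero => exact ⟨0, 0, by simp, by simp, by simp⟩
  | succ k ih =>
    obtain ⟨e, f, h⟩ := ih (by lia)
    obtain ⟨w, z, hwz⟩ := h.exists_cons hB hsep (by lia)
    exact ⟨_, _, hwz⟩

end Symplectic

section Square

variable {ι : Type*} [Fintype ι] [DecidableEq ι]

theorem exists_mul_mul_transpose_eq_stdPairing_sub {K : Type*} [Field K]
    {A : Matrix (ι × Fin 2) (ι × Fin 2) K} (hA : (toBilin' A).IsAlt) (hdet : A.det ≠ 0) :
    ∃ M, M * A * Mᵀ = stdPairing ι K - (stdPairing ι K)ᵀ := by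
  obtain ⟨e, f, h⟩ := exists_isSymplecticFamily hA
    (LinearMap.BilinForm.nondegenerate_toBilin'_of_det_ne_zero' A hdet).1 (Fintype.card ι)
    (by simp [mul_comm])
  let r := Fintype.equivFin ι
  let M : Matrix (ι × Fin 2) (ι × Fin 2) K :=
    of fun i => if i.2 = 0 then e (r i.1) else f (r i.1)
  have hM₀ (i) : M (i, 0) = e (r i) := rfl
  have hM₁ (i) : M (i, 1) = f (r i) := rfl
  have hM (i j) : (M * A * Mᵀ) i j = toBilin' A (M i) (M j) := by
    rw [toBilin'_apply', dotProduct_mulVec]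
    rfl
  refine ⟨M, ?_⟩
  ext ⟨i, b⟩ ⟨j, c⟩
  rw [hM]
  fin_cases b <;> fin_cases c <;>
    simp [hM₀, hM₁, stdPairing_apply, h.left_left, h.left_right, h.right_right,
      h.right_left hA, apply_ite, eq_comm]

theorem pfaffianSum_sq_of_isAlt {K : Type*} [Field K]
    {A : Matrix (ι × Fin 2) (ι × Fin 2) K} (hA : (toBilin' A).IsAlt) (hdet : A.det ≠ 0) :
    pfaffianSum A ^ 2 =
      (2 ^ Fintype.card ι * (Fintype.card ι).factorial) ^ 2 * A.det := by
  obtain ⟨M, hM⟩ := exists_mul_mul_transpose_eq_stdPairing_sub hA hdet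
  have hpf : M.det * pfaffianSum A = 2 ^ Fintype.card ι * (Fintype.card ι).factorial := by
    rw [← pfaffianSum_mul_mul_transpose, hM, pfaffianSum_sub_transpose, pfaffianSum_stdPairing]
  have hsq : M.det * A.det * M.det = 1 := by
    rw [← det_stdPairing_sub_transpose (ι := ι) (R := K), ← hM, det_mul, det_mul, det_transpose]
  rw [← hpf]
  linear_combination (-pfaffianSum A ^ 2) * hsq

theorem isAlt_toBilin'_sub_transpose {κ R : Type*} [Fintype κ] [DecidableEq κ] [CommRing R]
    (a : Matrix κ κ R) : (toBilin' (a - aᵀ)).IsAlt := by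
  intro v
  rw [toBilin'_apply', sub_mulVec, dotProduct_sub, mulVec_transpose, dotProduct_comm v (v ᵥ* a),
    dotProduct_mulVec, sub_self]

theorem map_det_sub_transpose {κ R S : Type*} [Fintype κ] [DecidableEq κ] [CommRing R] [CommRing S]
    (f : R →+* S) (a : Matrix κ κ R) : f (a - aᵀ).det = (a.map f - (a.map f)ᵀ).det := by
  rw [RingHom.map_det, map_sub]
  rfl

theorem pfaffianSum_sq_of_det_ne_zero {R : Type*} [CommRing R] [IsDomain R] [CharZero R]
    {a : Matrix (ι × Fin 2) (ι × Fin 2) R} (hdet : (a - aᵀ).det ≠ 0) :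
    pfaffianSum a ^ 2 = ((Fintype.card ι).factorial : R) ^ 2 * (a - aᵀ).det := by
  let φ := algebraMap R (FractionRing R)
  have hφ : Function.Injective φ := IsFractionRing.injective _ _
  have hsq := pfaffianSum_sq_of_isAlt (isAlt_toBilin'_sub_transpose (a.map φ))
    (by rwa [← map_det_sub_transpose, map_ne_zero_iff φ hφ])
  rw [pfaffianSum_sub_transpose, ← map_det_sub_transpose, ← map_pfaffianSum] at hsq
  refine mul_left_cancel₀ (pow_ne_zero 2 (pow_ne_zero (Fintype.card ι) two_ne_zero)) (hφ ?_)
  simp only [map_mul, map_pow, map_ofNat, map_natCast]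
  linear_combination hsq

theorem det_mvPolynomialX_sub_transpose_ne_zero :
    (mvPolynomialX (ι × Fin 2) (ι × Fin 2) ℤ - (mvPolynomialX (ι × Fin 2) (ι × Fin 2) ℤ)ᵀ).det
      ≠ 0 := by
  intro h
  have hmap := congrArg (MvPolynomial.eval fun p => stdPairing ι ℤ p.1 p.2) h
  rw [map_det_sub_transpose, ← RingHom.mapMatrix_apply, mvPolynomialX_mapMatrix_eval,
    det_stdPairing_sub_transpose, map_zero] at hmap
  exact one_ne_zero hmap

theorem pfaffianSum_sq {R : Type*} [CommRing R] (a : Matrix (ι × Fin 2) (ι × Fin 2) R) :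
    pfaffianSum a ^ 2 = ((Fintype.card ι).factorial : R) ^ 2 * (a - aᵀ).det := by
  let φ := MvPolynomial.eval₂Hom (Int.castRingHom R) fun p : (ι × Fin 2) × (ι × Fin 2) => a p.1 p.2
  have hφ : (mvPolynomialX (ι × Fin 2) (ι × Fin 2) ℤ).map φ = a :=
    mvPolynomialX_map_eval₂ (Int.castRingHom R) a
  have hgeneric := congrArg φ
    (pfaffianSum_sq_of_det_ne_zero (det_mvPolynomialX_sub_transpose_ne_zero (ι := ι)))
  simpa [map_pfaffianSum, map_det_sub_transpose, hφ] using hgeneric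

end Square

section Reindex

/-- The equivalence `(k, b) ↦ 2 * k + b`. -/
def pairEquiv (n : ℕ) : Fin n × Fin 2 ≃ Fin (2 * n) :=
  finProdFinEquiv.trans (finCongr (mul_comm n 2))

theorem val_pairEquiv {n : ℕ} (c : Fin n × Fin 2) :
    (pairEquiv n c : ℕ) = c.2 + 2 * c.1 :=
  rfl

theorem det_alternating_columns {α R : Type*} [CommRing R] {n : ℕ} (F G : Fin (2 * n) → α → R)
    (y : Fin n → α) :
    det (of fun (i c : Fin (2 * n)) =>
        if (c : ℕ) % 2 = 0 then F i (y ⟨(c : ℕ) / 2, by lia⟩)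
        else G i (y ⟨(c : ℕ) / 2, by lia⟩)) =
      (interleave (of fun i => F (pairEquiv n i)) (of fun i => G (pairEquiv n i)) y).det := by
  rw [← det_submatrix_equiv_self (pairEquiv n)]
  congr 1
  ext i ⟨k, b⟩
  have hdiv : (⟨(pairEquiv n (k, b) : ℕ) / 2, by lia⟩ : Fin n) = k :=
    Fin.ext (by simp only [val_pairEquiv]; lia)
  have hmod : (pairEquiv n (k, b) : ℕ) % 2 = 0 ↔ b = 0 := by
    rw [val_pairEquiv, Fin.ext_iff, Fin.val_zero]
    lia
  simp [interleave, hdiv, hmod]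

end Reindex

theorem integral_det_interleave_sq {ι α 𝕜 : Type*} [Fintype ι] [DecidableEq ι] [RCLike 𝕜]
    [MeasurableSpace α] {μ : Measure α} [SigmaFinite μ] (F G : Matrix (ι × Fin 2) α 𝕜)
    (hFG : ∀ i j, Integrable (fun t => F i t * G j t) μ) :
    (∫ y : ι → α, (interleave F G y).det ∂Measure.pi (fun _ => μ)) ^ 2 =
      ((Fintype.card ι).factorial : 𝕜) ^ 2 *
        det (of fun i j => ∫ t, (G i t * F j t - F i t * G j t) ∂μ) := by
  rw [integral_det_interleave F G hFG, pfaffianSum_sq, ← det_transpose]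
  congr 2
  ext i j
  simp only [transpose_apply, Matrix.sub_apply, of_apply, mul_comm (G i _)]
  rw [integral_sub (hFG j i) (hFG i j)]

end DeBruijn

theorem de_bruijn_identity_general {α 𝕜 : Type*} [MeasurableSpace α] [RCLike 𝕜] (μ : Measure α)
    [SigmaFinite μ] (n : ℕ) (F G : Fin (2 * n) → α → 𝕜)
    (hFG : ∀ i j, Integrable (fun t => F i t * G j t) μ) :
    ((n.factorial : 𝕜)⁻¹ *
        ∫ y : Fin n → α,
          Matrix.det (Matrix.of fun (i c : Fin (2 * n)) =>
            if (c : ℕ) % 2 = 0 then F i (y ⟨(c : ℕ) / 2, by lia⟩)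
            else G i (y ⟨(c : ℕ) / 2, by lia⟩)) ∂Measure.pi (fun _ => μ)) ^ 2 =
      Matrix.det (Matrix.of fun i j : Fin (2 * n) =>
        ∫ t, (G i t * F j t - F i t * G j t) ∂μ) := by
  have hfac : (n.factorial : 𝕜) ≠ 0 := by exact_mod_cast n.factorial_ne_zero
  simp_rw [DeBruijn.det_alternating_columns]
  rw [mul_pow,
    DeBruijn.integral_det_interleave_sq (Matrix.of _) (Matrix.of _) fun i j => hFG _ _,
    Fintype.card_fin, inv_pow, inv_mul_cancel_left₀ (pow_ne_zero 2 hfac),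
    ← Matrix.det_submatrix_equiv_self (DeBruijn.pairEquiv n)]
  rfl

/-- de Bruijn's identity: the square of
`(1/n!) ∫_{ℝ^n} det( F_i(y_1), G_i(y_1), …, F_i(y_n), G_i(y_n) )_{0≤i≤2n-1} dy`
equals the determinant of the `2n×2n` skew-symmetric matrix
`A_{ij} = ∫_ℝ (G_i F_j − F_i G_j) dy`. -/
theorem de_bruijn_identity (n : ℕ) (F G : Fin (2 * n) → ℝ → ℝ)
    (hFmeas : ∀ i, Measurable (F i)) (hGmeas : ∀ i, Measurable (G i))
    (hFG : ∀ i j, Integrable (fun t : ℝ => F i t * G j t)) :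
    (((n.factorial : ℝ))⁻¹ *
        ∫ y : Fin n → ℝ,
          Matrix.det (Matrix.of fun (i c : Fin (2 * n)) =>
            if (c : ℕ) % 2 = 0 then F i (y ⟨(c : ℕ) / 2, by have := c.isLt; omega⟩)
            else G i (y ⟨(c : ℕ) / 2, by have := c.isLt; omega⟩))) ^ 2 =
      Matrix.det (Matrix.of fun i j : Fin (2 * n) =>
        ∫ t : ℝ, (G i t * F j t - F i t * G j t)) :=
  de_bruijn_identity_general volume n F G hFG
end

section
/- Under the Robinson–Schensted correspondence π ↦ (P(π), Q(π)), if π ↦ (P,Q) then π^{-1} ↦ (Q,P); consequently involutions π (π² = id) correspond bijectively to single standard Young tableaux P (via π ↦ (P,P)). -/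
/-- Schensted row insertion: `v` bumps the first entry strictly greater than `v`. -/
def insertRow : List ℕ → ℕ → List ℕ × Option ℕ
  | [], v => ([v], none)
  | a :: as, v =>
      if v < a then (v :: as, some a)
      else
        let r := insertRow as v
        (a :: r.1, r.2)

/-- Schensted insertion of a value into a tableau (list of rows). -/
def insertTab : List (List ℕ) → ℕ → List (List ℕ)
  | [], v => [[v]]
  | r :: rs, v =>
      match insertRow r v with
      | (r', none) => r' :: rs
      | (r', some w) => r' :: insertTab rs w

/-- Update the recording tableau `Q`: place the new label `m` in the (unique) row of `Q`
that is shorter than the corresponding row of the new insertion tableau `P'`. -/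
def fitQ : List (List ℕ) → List (List ℕ) → ℕ → List (List ℕ)
  | _, [], _ => []
  | [], p :: ps, m => [m] :: fitQ [] ps m
  | q :: qs, p :: ps, m => (if q.length < p.length then q ++ [m] else q) :: fitQ qs ps m

/-- The Robinson–Schensted correspondence: reading the word `w` left to right, build the
insertion tableau `P` by Schensted insertion and the recording tableau `Q` by placing the
successive labels `0, 1, 2, …` at the newly created cells. -/
def rsk (w : List ℕ) : List (List ℕ) × List (List ℕ) :=
  let r := w.foldl (fun s x =>
    let P' := insertTab s.1 x
    (P', fitQ s.2.1 P' s.2.2, s.2.2 + 1)) (([] : List (List ℕ)), ([] : List (List ℕ)), 0)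
  (r.1, r.2.1)

/-- The word `π(0), π(1), …, π(n-1)` of a permutation `π ∈ S_n`. -/
def permWord {n : ℕ} (π : Equiv.Perm (Fin n)) : List ℕ :=
  (List.finRange n).map fun i => (π i : ℕ)

/-- A standard Young tableau with `n` boxes, presented as a list of rows: rows strictly
increase, rows weakly shorten downwards with strict increase along columns, there are no
empty rows, and the entries are exactly `0, 1, …, n-1`. -/
def IsSYTList (n : ℕ) (P : List (List ℕ)) : Prop :=
  (∀ r ∈ P, r.Chain' (· < ·)) ∧
  P.Chain' (fun r s => s.length ≤ r.length ∧ ∀ j < s.length, r.getD j 0 < s.getD j 0) ∧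
  ([] : List ℕ) ∉ P ∧
  List.Perm P.flatten (List.range n)

/-! Write `P` as the word recording, for each entry `j`, the row of `P` containing `j`. Inserting a
letter scans this word from left to right by a local rule on pairs of labels: the label of `j`
and the row in which the insertion, restricted to the entries below `j`, has come to rest.
Doing this for all letters fills an `n × n` grid, the growth diagram of Fomin, whose top boundary
spells `P` and whose right boundary spells `Q`. The local rule is symmetric in its two labels and
the grid of `π⁻¹` is the transpose of that of `π`, so inverting `π` exchanges `P` and `Q`.
Running the rule backwards from the two boundaries shows that `π ↦ (P, Q)` is bijective, and
then `P = Q` holds exactly when `π = π⁻¹`. -/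

/-! ### Growth diagrams -/

/-- Fomin's local rule on a cell of a growth diagram. An edge label is the row of the box by which
the shapes at the two ends of the edge differ, `none` if they agree; `cross` says that the cell
carries a point of the permutation. Sends the bottom and left labels to the top and right ones. -/
def localRule (cross : Prop) [Decidable cross] : Option ℕ → Option ℕ → Option ℕ × Option ℕ
  | none, none => if cross then (some 0, some 0) else (none, none)
  | some a, none => (some a, none)
  | none, some b => (none, some b)
  | some a, some b => if a = b then (some (a + 1), some (a + 1)) else (some a, some b)

theorem localRule_swap {c d : Prop} [Decidable c] [Decidable d] (h : c ↔ d) (a b : Option ℕ) :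
    localRule c a b = (localRule d b a).swap := by
  cases a <;> cases b <;> simp only [localRule, h] <;> grind

theorem localRule_injective {c d : Prop} [Decidable c] [Decidable d] {a b a' b' : Option ℕ}
    (h : localRule c a b = localRule d a' b') : a = a' ∧ b = b' := by
  cases a <;> cases b <;> cases a' <;> cases b' <;> simp only [localRule] at h <;> grind

/-- The two paths around a cell add the same boxes. -/
theorem localRule_conserves (c : Prop) [Decidable c] (a b : Option ℕ) (k : ℕ) :
    ((if (localRule c a b).1 = some k then 1 else 0) + if b = some k then 1 else 0) =
      (if a = some k then 1 else 0) + if (localRule c a b).2 = some k then 1 else 0 := by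
  cases a <;> cases b <;> grind [localRule]

theorem localRule_snd_eq_succ {c : Prop} [Decidable c] {a b : Option ℕ} {k : ℕ}
    (h : (localRule c a b).2 = some (k + 1)) :
    (a = some k ∧ b = some k) ∨ (b = some (k + 1) ∧ a ≠ some (k + 1)) := by
  cases a <;> cases b <;> simp only [localRule] at h <;> grind

/-- The only outputs not reached from `some b` on the left are `(none, none)`, `(some a, none)` and
the output `(some 0, some 0)` of a cross. -/
theorem exists_localRule_eq {a : Option ℕ} {k : ℕ} (h : ¬(a = some 0 ∧ k = 0)) :
    ∃ t q, (∀ (c : Prop) [Decidable c], localRule c t (some q) = (a, some k)) ∧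
      ((a = some k ∧ k = q + 1) ∨ (a ≠ some k ∧ k = q)) := by
  by_cases hak : a = some k
  · obtain ⟨q, rfl⟩ := Nat.exists_eq_succ_of_ne_zero (n := k) (by grind)
    exact ⟨some q, q, fun c _ => by simp [localRule, hak], .inl ⟨hak, rfl⟩⟩
  · refine ⟨a, k, fun c _ => ?_, .inr ⟨hak, rfl⟩⟩
    cases a <;> grind [localRule]

/-- Encodes a tableau with distinct entries by recording the row `r j` that contains the entry `j`,
with `r j = none` if `j` is not an entry. -/
abbrev RowWord := ℕ → Option ℕ

namespace RowWord

/-- The row gaining a box when `v` is inserted into the tableau of the entries below `j`, `none` if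
`j ≤ v`: the label of a vertical edge of the growth diagram. -/
def endRow (r : RowWord) (v : ℕ) : ℕ → Option ℕ
  | 0 => none
  | j + 1 => (localRule (v = j) (r j) (endRow r v j)).2

/-- The row word of the tableau obtained by Schensted insertion of `v`. -/
def insertLetter (r : RowWord) (v : ℕ) : RowWord :=
  fun j => (localRule (v = j) (r j) (r.endRow v j)).1

theorem endRow_congr {r s : RowWord} (v : ℕ) {n : ℕ} (h : ∀ j < n, r j = s j) :
    r.endRow v n = s.endRow v n := by
  induction n with
  | zero => rfl
  | succ n ih =>
    simp only [endRow, h n n.lt_succ_self, ih fun j hj => h j (hj.trans n.lt_succ_self)]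

theorem insertLetter_congr {r s : RowWord} (v : ℕ) {n : ℕ} (h : ∀ j < n, r j = s j) :
    ∀ j < n, r.insertLetter v j = s.insertLetter v j := fun j hj => by
  simp only [insertLetter, h j hj, endRow_congr v fun i (hi : i < j) => h i (hi.trans hj)]

theorem endRow_eq_none_of_le (r : RowWord) {v j : ℕ} (hj : j ≤ v) : r.endRow v j = none := by
  induction j with
  | zero => rfl
  | succ j ih =>
    have hvj : v ≠ j := by omega
    simp only [endRow, ih (by omega)]
    cases r j <;> simp [localRule, hvj]

theorem insertLetter_of_lt (r : RowWord) {v j : ℕ} (hj : j < v) : r.insertLetter v j = r j := by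
  simp only [insertLetter, r.endRow_eq_none_of_le hj.le]
  cases r j <;> simp [localRule, hj.ne']

theorem localRule_self_of_eq_none {r : RowWord} {v : ℕ} (hv : r v = none) :
    localRule (v = v) (r v) (r.endRow v v) = (some 0, some 0) := by
  simp [hv, r.endRow_eq_none_of_le le_rfl, localRule]

theorem insertLetter_eq_none_iff (r : RowWord) (v j : ℕ) :
    r.insertLetter v j = none ↔ r j = none ∧ j ≠ v := by
  rcases eq_or_ne j v with rfl | hj
  · simp only [insertLetter, r.endRow_eq_none_of_le le_rfl]
    cases r j <;> simp [localRule]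
  · simp only [insertLetter]
    cases r j <;> cases r.endRow v j <;> simp only [localRule] <;> grind

theorem eq_of_insertLetter_eq {r s : RowWord} {v v' n : ℕ}
    (hins : ∀ j < n, r.insertLetter v j = s.insertLetter v' j)
    (hend : r.endRow v n = s.endRow v' n) : ∀ j < n, r j = s j := by
  induction n with
  | zero => simp
  | succ n ih =>
    obtain ⟨hr, hend'⟩ := localRule_injective (Prod.ext (hins n n.lt_succ_self) hend)
    have hlt := ih (fun j hj => hins j (hj.trans n.lt_succ_self)) hend'
    exact fun j hj => (Nat.lt_succ_iff_lt_or_eq.mp hj).elim (hlt j) (· ▸ hr)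

end RowWord

/-- The row word of the insertion tableau of the first `i` letters of `w`: the horizontal edge
labels at height `i` of the growth diagram. -/
def growth (w : ℕ → ℕ) : ℕ → RowWord
  | 0 => fun _ => none
  | i + 1 => (growth w i).insertLetter (w i)

/-- The row word of the recording tableau of `w`, for letters below `n`: the vertical edge labels on
the right boundary of the growth diagram. -/
def recording (w : ℕ → ℕ) (n : ℕ) : RowWord :=
  fun i => (growth w i).endRow (w i) n

theorem growth_congr {w w' : ℕ → ℕ} {i : ℕ} (h : ∀ j < i, w j = w' j) :
    growth w i = growth w' i := by
  induction i with
  | zero => rfl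
  | succ i ih =>
    simp only [growth, h i i.lt_succ_self, ih fun j hj => h j (hj.trans i.lt_succ_self)]

theorem recording_congr {w w' : ℕ → ℕ} (n : ℕ) {i : ℕ} (h : ∀ j ≤ i, w j = w' j) :
    recording w n i = recording w' n i := by
  rw [recording, recording, growth_congr fun j hj => h j hj.le, h i le_rfl]

theorem growth_update_succ (w : ℕ → ℕ) (i v : ℕ) :
    growth (Function.update w i v) (i + 1) = (growth w i).insertLetter v := by
  rw [growth, Function.update_self, growth_congr fun j hj => Function.update_of_ne hj.ne v w]

theorem recording_update_self (w : ℕ → ℕ) (n i v : ℕ) :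
    recording (Function.update w i v) n i = (growth w i).endRow v n := by
  rw [recording, Function.update_self, growth_congr fun j hj => Function.update_of_ne hj.ne v w]

theorem growth_eq_none_iff (w : ℕ → ℕ) (i j : ℕ) : growth w i j = none ↔ ∀ l < i, w l ≠ j := by
  induction i with
  | zero => simp [growth]
  | succ i ih =>
    simp only [growth, RowWord.insertLetter_eq_none_iff, ih, Nat.lt_succ_iff_lt_or_eq]
    grind

theorem growth_letter_eq_none {w : ℕ → ℕ} {m i : ℕ} (hinj : Set.InjOn w (Set.Iio m)) (hi : i < m) :
    growth w i (w i) = none :=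
  (growth_eq_none_iff w i (w i)).mpr fun _ hl h => hl.ne (hinj (hl.trans hi) hi h)

theorem recording_eq_growth_inv (σ : Equiv.Perm ℕ) (n i : ℕ) :
    recording σ n i = growth ⇑σ⁻¹ n i := by
  have cell (i j : ℕ) (hbottom : growth σ i j = recording ⇑σ⁻¹ i j)
      (hleft : recording σ j i = growth ⇑σ⁻¹ j i) :
      growth σ (i + 1) j = recording ⇑σ⁻¹ (i + 1) j ∧
        recording σ (j + 1) i = growth ⇑σ⁻¹ (j + 1) i := by
    have hcross : σ i = j ↔ σ⁻¹ j = i := by rw [Equiv.Perm.inv_eq_iff_eq, eq_comm]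
    have h := localRule_swap hcross (growth σ i j) (recording σ j i)
    nth_rewrite 2 [hbottom, hleft] at h
    exact ⟨congrArg Prod.fst h, congrArg Prod.snd h⟩
  have vertical (i : ℕ) (hrow : ∀ j, growth σ i j = recording ⇑σ⁻¹ i j) (j : ℕ) :
      recording σ j i = growth ⇑σ⁻¹ j i := by
    induction j with
    | zero => rfl
    | succ j ih => exact (cell i j (hrow j) ih).2
  have horizontal (i : ℕ) : ∀ j, growth σ i j = recording ⇑σ⁻¹ i j := by
    induction i with
    | zero => exact fun _ => rfl
    | succ i ih => exact fun j => (cell i j (ih j) (vertical i ih j)).1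
  exact vertical i (horizontal i) n

theorem growth_recording_injective {w w' : ℕ → ℕ} {m n : ℕ}
    (hmaps : Set.MapsTo w (Set.Iio m) (Set.Iio n)) (hinj : Set.InjOn w (Set.Iio m))
    (hgrowth : ∀ j < n, growth w m j = growth w' m j)
    (hrec : ∀ i < m, recording w n i = recording w' n i) : ∀ i < m, w i = w' i := by
  induction m with
  | zero => simp
  | succ m ih =>
    have hprev := RowWord.eq_of_insertLetter_eq hgrowth (hrec m m.lt_succ_self)
    have hsub : Set.Iio m ⊆ Set.Iio (m + 1) := Set.Iio_subset_Iio m.le_succ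
    have hlt := ih (hmaps.mono_left hsub) (hinj.mono hsub) hprev
      fun i hi => hrec i (hi.trans m.lt_succ_self)
    have hwm : w m < n := hmaps (Set.mem_Iio.mpr m.lt_succ_self)
    have hnew := growth_letter_eq_none hinj m.lt_succ_self
    have hlast : w m = w' m := by
      by_contra hne
      have : growth w' (m + 1) (w m) = none :=
        (RowWord.insertLetter_eq_none_iff _ _ _).mpr ⟨hprev _ hwm ▸ hnew, hne⟩
      rw [← hgrowth _ hwm, growth_eq_none_iff] at this
      exact this m m.lt_succ_self rfl
    exact fun i hi => (Nat.lt_succ_iff_lt_or_eq.mp hi).elim (hlt i) (· ▸ hlast)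

/-! ### Lattice words -/

namespace RowWord

/-- The length of row `k` of the tableau of the entries below `j`. -/
def shape (r : RowWord) (j k : ℕ) : ℕ :=
  Nat.count (fun i => r i = some k) j

/-- Lattice words: the entries below `j` form a partition shape for each `j ≤ n`, which is the
condition for `r` to describe a standard tableau on its entries below `n`. -/
def IsLattice (r : RowWord) (n : ℕ) : Prop :=
  ∀ j ≤ n, ∀ k, r.shape j (k + 1) ≤ r.shape j k

theorem shape_succ (r : RowWord) (j k : ℕ) :
    r.shape (j + 1) k = r.shape j k + if r j = some k then 1 else 0 :=
  Nat.count_succ _ j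

theorem shape_congr {r s : RowWord} {n : ℕ} (h : ∀ j < n, r j = s j) (k : ℕ) :
    r.shape n k = s.shape n k :=
  le_antisymm (Nat.count_mono_left fun j hj => (h j hj ▸ ·))
    (Nat.count_mono_left fun j hj => (h j hj ▸ ·))

theorem IsLattice.mono {r : RowWord} {m n : ℕ} (hr : r.IsLattice n) (hmn : m ≤ n) :
    r.IsLattice m :=
  fun j hj => hr j (hj.trans hmn)

theorem IsLattice.congr {r s : RowWord} {n : ℕ} (hr : r.IsLattice n) (h : ∀ j < n, r j = s j) :
    s.IsLattice n := fun j hj k => by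
  have hj' (i : ℕ) (hi : i < j) : s i = r i := (h i (hi.trans_le hj)).symm
  simpa only [shape_congr hj'] using hr j hj k

theorem shape_insertLetter (r : RowWord) (v j k : ℕ) :
    (r.insertLetter v).shape j k = r.shape j k + if r.endRow v j = some k then 1 else 0 := by
  induction j with
  | zero => rfl
  | succ j ih =>
    have := localRule_conserves (v = j) (r j) (r.endRow v j) k
    simp only [shape_succ, ih, endRow, insertLetter]
    grind

theorem IsLattice.insertLetter {r : RowWord} {n : ℕ} (hr : r.IsLattice n) (v : ℕ) :
    (r.insertLetter v).IsLattice n := by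
  intro j hj
  induction j with
  | zero => simp [shape]
  | succ j ih =>
    intro k
    have hj_ins := ih (by omega) k
    have hj_r := hr j (by omega) k
    have hsucc := hr (j + 1) hj k
    rw [shape_insertLetter, shape_insertLetter] at hj_ins ⊢
    by_cases hend : r.endRow v (j + 1) = some (k + 1)
    · rcases localRule_snd_eq_succ hend with ⟨hr_j, -⟩ | ⟨hend_j, hr_j⟩ <;>
        grind [shape_succ]
    · simp only [if_neg hend]
      omega

theorem isLattice_growth (w : ℕ → ℕ) (i n : ℕ) : (growth w i).IsLattice n := by
  induction i with
  | zero => intro j _ k; simp [growth, shape]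
  | succ i ih => exact ih.insertLetter (w i)

/-! ### Reversing the growth -/

/-- One cell of the reverse insertion. -/
theorem exists_insertLetter_eq_of_localRule {r' : RowWord} {m k q : ℕ} {t : Option ℕ}
    (hr' : r'.IsLattice (m + 1)) (hk : r'.shape (m + 1) (k + 1) < r'.shape (m + 1) k)
    (hrule : ∀ (c : Prop) [Decidable c], localRule c t (some q) = (r' m, some k))
    (hprev : ∃ v < m, ∃ r : RowWord, r v = none ∧ r.endRow v m = some q ∧
      (∀ j < m, r.insertLetter v j = r' j) ∧ r.IsLattice m) :
    ∃ v < m + 1, ∃ r : RowWord, r v = none ∧ r.endRow v (m + 1) = some k ∧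
      (∀ j < m + 1, r.insertLetter v j = r' j) ∧ r.IsLattice (m + 1) := by
  obtain ⟨v, hv, r, hfresh, hend, hins, hr⟩ := hprev
  let s : RowWord := Function.update r m t
  have hsr : ∀ j < m, r j = s j := fun j hj => (Function.update_of_ne hj.ne t r).symm
  have hcell : localRule (v = m) (s m) (s.endRow v m) = (r' m, some k) := by
    rw [← endRow_congr v hsr, hend, show s m = t from Function.update_self m t r]
    exact hrule (v = m)
  have hsend : s.endRow v (m + 1) = some k := congrArg Prod.snd hcell
  have hsins : ∀ j < m + 1, s.insertLetter v j = r' j := fun j hj => by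
    rcases Nat.lt_succ_iff_lt_or_eq.mp hj with hj | rfl
    · rw [← insertLetter_congr v hsr j hj, hins j hj]
    · exact congrArg Prod.fst hcell
  refine ⟨v, by omega, s, hsr v hv ▸ hfresh, hsend, hsins, fun j hj p => ?_⟩
  rcases hj.lt_or_eq with hj | rfl
  · exact hr.congr hsr j (by omega) p
  · have hp := hr' (m + 1) le_rfl p
    have hshape (p : ℕ) := shape_insertLetter s v (m + 1) p
    simp only [shape_congr hsins, hsend, Option.some.injEq] at hshape
    grind

theorem exists_insertLetter_eq_of_removable {r' : RowWord} {m k : ℕ} (hr' : r'.IsLattice m)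
    (hk : r'.shape m (k + 1) < r'.shape m k) :
    ∃ v < m, ∃ r : RowWord, r v = none ∧ r.endRow v m = some k ∧
      (∀ j < m, r.insertLetter v j = r' j) ∧ r.IsLattice m := by
  induction m generalizing k with
  | zero => simp [shape] at hk
  | succ m ih =>
    by_cases hcross : r' m = some 0 ∧ k = 0
    · obtain ⟨hm, rfl⟩ := hcross
      let r : RowWord := Function.update r' m none
      have hrr' : ∀ j < m, r' j = r j := fun j hj => (Function.update_of_ne hj.ne none r').symm
      have hfresh : r m = none := Function.update_self m none r'
      have hcell := localRule_self_of_eq_none hfresh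
      refine ⟨m, m.lt_succ_self, r, hfresh, congrArg Prod.snd hcell, fun j hj => ?_,
        fun j hj p => ?_⟩
      · rcases Nat.lt_succ_iff_lt_or_eq.mp hj with hj | rfl
        · rw [r.insertLetter_of_lt hj, hrr' j hj]
        · rw [hm]
          exact congrArg Prod.fst hcell
      · have hr := (hr'.mono m.le_succ).congr hrr'
        rcases hj.lt_or_eq with hj | rfl
        · exact hr j (by omega) p
        · simpa [shape_succ, hfresh] using hr m le_rfl p
    · obtain ⟨t, q, hrule, hcase⟩ := exists_localRule_eq hcross
      refine exists_insertLetter_eq_of_localRule hr' hk hrule (ih (hr'.mono m.le_succ) ?_)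
      have hq := hr' (m + 1) le_rfl q
      rw [shape_succ, shape_succ] at hk hq
      grind

end RowWord

theorem injOn_update_Iio_succ {α : Type*} {w : ℕ → α} {i : ℕ} {v : α}
    (hw : Set.InjOn w (Set.Iio i)) (hv : ∀ j < i, w j ≠ v) :
    Set.InjOn (Function.update w i v) (Set.Iio (i + 1)) := by
  have hlt : Set.EqOn w (Function.update w i v) (Set.Iio i) := fun j hj =>
    (Function.update_of_ne (Set.mem_Iio.mp hj).ne v w).symm
  rw [← Order.succ_eq_add_one, Order.Iio_succ_eq_insert, Set.injOn_insert (by simp),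
    Function.update_self]
  exact ⟨hw.congr hlt, fun ⟨j, hj, h⟩ => hv j hj ((hlt hj).trans h)⟩

open RowWord in
theorem exists_growth_eq_recording_eq {r s : RowWord} {n i : ℕ} (hr : r.IsLattice n)
    (hs : s.IsLattice i) (hs_some : ∀ j < i, s j ≠ none) (hshape : r.shape n = s.shape i) :
    ∃ w : ℕ → ℕ, Set.MapsTo w (Set.Iio i) (Set.Iio n) ∧ Set.InjOn w (Set.Iio i) ∧
      (∀ j < n, growth w i j = r j) ∧ ∀ j < i, recording w n j = s j := by
  induction i generalizing r with
  | zero =>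
    have hempty (k : ℕ) : ∀ j < n, r j ≠ some k :=
      Nat.count_iff_forall_not.mp (congrFun hshape k)
    refine ⟨id, by simp [Set.MapsTo], by simp, fun j hj => ?_, by simp⟩
    exact (Option.eq_none_iff_forall_ne_some.mpr fun k => hempty k j hj).symm
  | succ i ih =>
    obtain ⟨k, hk⟩ := Option.ne_none_iff_exists'.mp (hs_some i i.lt_succ_self)
    have hremovable : r.shape n (k + 1) < r.shape n k := by
      have := hs i i.le_succ k
      simp only [hshape, shape_succ, hk, Option.some.injEq]
      grind
    obtain ⟨v, hv, r₀, hfresh, hend, hins, hr₀⟩ := exists_insertLetter_eq_of_removable hr hremovable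
    have hshape₀ : r₀.shape n = s.shape i := funext fun p => by
      have := shape_insertLetter r₀ v n p
      rw [shape_congr hins, hshape, shape_succ, hend, hk] at this
      omega
    obtain ⟨w, hmaps, hinj, hgrowth, hrec⟩ := ih hr₀ (hs.mono i.le_succ)
      (fun j hj => hs_some j (hj.trans i.lt_succ_self)) hshape₀
    have hnew : ∀ j < i, w j ≠ v := by rw [← growth_eq_none_iff, hgrowth v hv, hfresh]
    refine ⟨Function.update w i v, fun j hj => ?_, injOn_update_Iio_succ hinj hnew,
      fun j hj => ?_, fun j hj => ?_⟩
    · rcases Nat.lt_succ_iff_lt_or_eq.mp hj with hj | rfl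
      · exact (Function.update_of_ne hj.ne v w).symm ▸ hmaps hj
      · exact (Function.update_self j v w).symm ▸ hv
    · rw [growth_update_succ, insertLetter_congr v hgrowth j hj, hins j hj]
    · rcases Nat.lt_succ_iff_lt_or_eq.mp hj with hj | rfl
      · rw [← hrec j hj]
        exact recording_congr n fun l hl => Function.update_of_ne (hl.trans_lt hj).ne v w
      · rw [recording_update_self, endRow_congr v hgrowth, hend, hk]

/-! ### Schensted insertion on row words -/

/-- Appends `m` to row `k` of `T`. When `k` exceeds the number of rows, empty rows are filled in, so
that `appendToRow` adds an entry to row `k` unconditionally. -/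
def appendToRow : List (List ℕ) → ℕ → ℕ → List (List ℕ)
  | [], 0, m => [[m]]
  | [], k + 1, m => [] :: appendToRow [] k m
  | r :: rs, 0, m => (r ++ [m]) :: rs
  | r :: rs, k + 1, m => r :: appendToRow rs k m

/-- The index of the row in which `insertTab T v` gains a box. -/
def insertionRow : List (List ℕ) → ℕ → ℕ
  | [], _ => 0
  | r :: rs, v =>
      match insertRow r v with
      | (_, none) => 0
      | (_, some w) => insertionRow rs w + 1

/-- The tableau whose entries are the `i < n` with `r i ≠ none`, placed according to `r`. -/
def RowWord.tableau (r : RowWord) : ℕ → List (List ℕ)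
  | 0 => []
  | n + 1 =>
      match r n with
      | none => r.tableau n
      | some k => appendToRow (r.tableau n) k n

theorem getD_appendToRow (T : List (List ℕ)) (a m k : ℕ) :
    (appendToRow T a m).getD k [] = T.getD k [] ++ if a = k then [m] else [] := by
  induction T, a, m using appendToRow.induct generalizing k <;> cases k <;>
    simp_all [appendToRow]

theorem flatten_appendToRow_perm (T : List (List ℕ)) (k m : ℕ) :
    (appendToRow T k m).flatten.Perm (m :: T.flatten) := by
  induction T, k, m using appendToRow.induct with
  | case1 => simp [appendToRow]
  | case2 k m ih => simp_all [appendToRow]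
  | case3 r rs m => simp [appendToRow]
  | case4 r rs k m ih =>
    simpa [appendToRow] using (ih.append_left r).trans List.perm_middle

theorem nil_notMem_appendToRow {T : List (List ℕ)} {k : ℕ} (m : ℕ) (hT : [] ∉ T)
    (hk : k ≤ T.length) : [] ∉ appendToRow T k m := by
  induction T, k, m using appendToRow.induct <;> simp_all [appendToRow]

theorem insertRow_append_singleton (l : List ℕ) {v m : ℕ} (hv : v < m) :
    insertRow (l ++ [m]) v = match insertRow l v with
      | (l', none) => (l', some m)
      | (l', some w) => (l' ++ [m], some w) := by
  induction l with
  | nil => simp [insertRow, hv]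
  | cons a as ih =>
    simp only [List.cons_append, insertRow, ih]
    split_ifs
    · rfl
    · rcases insertRow as v with ⟨l', _ | w⟩ <;> rfl

theorem insertRow_of_forall_lt {l : List ℕ} {m : ℕ} (h : ∀ x ∈ l, x < m) :
    insertRow l m = (l ++ [m], none) := by
  induction l with
  | nil => rfl
  | cons a as ih =>
    rw [List.forall_mem_cons] at h
    simp [insertRow, ih h.2, h.1.le]

theorem insertRow_eq_append_of_snd_eq_none {l l' : List ℕ} {v : ℕ}
    (h : insertRow l v = (l', none)) : l' = l ++ [v] := by
  induction l generalizing l' with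
  | nil => simp_all [insertRow]
  | cons a as ih => grind [insertRow]

theorem mem_and_length_eq_of_insertRow_eq_some {l l' : List ℕ} {v w : ℕ}
    (h : insertRow l v = (l', some w)) : w ∈ l ∧ l'.length = l.length := by
  induction l generalizing l' with
  | nil => simp [insertRow] at h
  | cons a as ih => grind [insertRow]

theorem insertTab_of_forall_lt {T : List (List ℕ)} {m : ℕ} (h : ∀ x ∈ T.flatten, x < m) :
    insertTab T m = appendToRow T 0 m ∧ insertionRow T m = 0 := by
  cases T with
  | nil => simp [insertTab, appendToRow, insertionRow]
  | cons r rs =>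
    have hr := insertRow_of_forall_lt (l := r) fun x hx => h x (by simp [hx])
    simp [insertTab, appendToRow, insertionRow, hr]

/-- The local rule on tableaux: a largest entry `m` moves to the next row exactly when the insertion
of `v` ends in its row. -/
theorem insertTab_appendToRow {T : List (List ℕ)} (a : ℕ) {v m : ℕ} (hT : ∀ x ∈ T.flatten, x < m)
    (hv : v < m) :
    insertTab (appendToRow T a m) v =
        appendToRow (insertTab T v) (if a = insertionRow T v then a + 1 else a) m ∧
      insertionRow (appendToRow T a m) v =
        if a = insertionRow T v then a + 1 else insertionRow T v := by
  induction T generalizing a v with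
  | nil => cases a <;> simp [insertionRow, appendToRow, insertTab, insertRow, hv]
  | cons r rs ih =>
    simp only [List.flatten_cons, List.mem_append] at hT
    have hrs : ∀ x ∈ rs.flatten, x < m := fun x hx => hT x (.inr hx)
    rcases h : insertRow r v with ⟨r', _ | w⟩
    · cases a with
      | zero =>
        have hmax := insertTab_of_forall_lt hrs
        simp [insertionRow, appendToRow, insertTab, h, insertRow_append_singleton _ hv, hmax]
      | succ a => simp [insertionRow, appendToRow, insertTab, h]
    · cases a with
      | zero => simp [insertionRow, appendToRow, insertTab, h, insertRow_append_singleton _ hv]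
      | succ a =>
        have hw : w < m := hT w (.inl (mem_and_length_eq_of_insertRow_eq_some h).1)
        have hrec := ih a hrs hw
        simp only [insertionRow, appendToRow, insertTab, h, hrec, Nat.add_right_cancel_iff]
        split_ifs <;> simp [appendToRow]

namespace RowWord

theorem tableau_congr {r s : RowWord} {n : ℕ} (h : ∀ j < n, r j = s j) :
    r.tableau n = s.tableau n := by
  induction n with
  | zero => rfl
  | succ n ih =>
    simp only [tableau, h n n.lt_succ_self, ih fun j hj => h j (hj.trans n.lt_succ_self)]

theorem tableau_eq_nil {r : RowWord} {n : ℕ} (h : ∀ j < n, r j = none) : r.tableau n = [] := by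
  induction n with
  | zero => rfl
  | succ n ih =>
    simp only [tableau, h n n.lt_succ_self, ih fun j hj => h j (hj.trans n.lt_succ_self)]

theorem getD_tableau (r : RowWord) (n k : ℕ) :
    (r.tableau n).getD k [] = (List.range n).filter fun i => r i = some k := by
  induction n with
  | zero => rfl
  | succ n ih =>
    rw [List.range_succ, List.filter_append, ← ih]
    rcases h : r n with _ | a
    · simp [tableau, h]
    · simp only [tableau, h, getD_appendToRow]
      split_ifs <;> simp_all

theorem flatten_tableau_perm (r : RowWord) (n : ℕ) :
    (r.tableau n).flatten.Perm ((List.range n).filter fun i => (r i).isSome) := by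
  induction n with
  | zero => rfl
  | succ n ih =>
    rw [List.range_succ, List.filter_append]
    rcases h : r n with _ | k
    · simpa [tableau, h] using ih
    · simpa [tableau, h] using (flatten_appendToRow_perm _ k n).trans
        ((ih.cons n).trans (List.perm_append_singleton n _).symm)

theorem lt_of_mem_flatten_tableau {r : RowWord} {n x : ℕ} (hx : x ∈ (r.tableau n).flatten) :
    x < n := by
  rw [(r.flatten_tableau_perm n).mem_iff] at hx
  exact List.mem_range.mp (List.mem_of_mem_filter hx)

theorem insertTab_tableau {r : RowWord} {v n : ℕ} (hv : r v = none) (hvn : v < n) :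
    insertTab (r.tableau n) v = (r.insertLetter v).tableau n ∧
      r.endRow v n = some (insertionRow (r.tableau n) v) := by
  induction n, hvn using Nat.le_induction with
  | base =>
    have hcell := localRule_self_of_eq_none hv
    have hins : r.insertLetter v v = some 0 := congrArg Prod.fst hcell
    have hend : r.endRow v (v + 1) = some 0 := congrArg Prod.snd hcell
    have hmax := insertTab_of_forall_lt (T := r.tableau v) fun x hx => lt_of_mem_flatten_tableau hx
    have hbelow : (r.insertLetter v).tableau v = r.tableau v :=
      tableau_congr fun j hj => r.insertLetter_of_lt hj
    simp only [tableau, hins, hend, hv, hmax, hbelow, and_self]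
  | succ n hvn ih =>
    rcases h : r n with _ | a
    · simp [tableau, insertLetter, endRow, h, ih, localRule]
    · have hmax := insertTab_appendToRow a (T := r.tableau n)
        (fun x hx => lt_of_mem_flatten_tableau hx) hvn
      simp only [tableau, insertLetter, endRow, h, ih, localRule, hmax]
      split_ifs <;> simp

end RowWord

/-! ### The recording tableau -/

theorem fitQ_of_map_length_eq {Q P : List (List ℕ)} (m : ℕ)
    (h : Q.map List.length = P.map List.length) : fitQ Q P m = Q := by
  induction Q generalizing P with
  | nil => cases P <;> simp_all [fitQ]
  | cons q qs ih => cases P <;> simp_all [fitQ]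

theorem fitQ_insertTab {Q P : List (List ℕ)} (v m : ℕ)
    (h : Q.map List.length = P.map List.length) :
    fitQ Q (insertTab P v) m = appendToRow Q (insertionRow P v) m ∧
      (appendToRow Q (insertionRow P v) m).map List.length =
        (insertTab P v).map List.length := by
  induction Q generalizing P v with
  | nil => cases P <;> simp_all [fitQ, insertTab, insertionRow, appendToRow]
  | cons q qs ih =>
    cases P with
    | nil => simp at h
    | cons p ps =>
      simp only [List.map_cons, List.cons.injEq] at h
      rcases hins : insertRow p v with ⟨p', _ | w⟩
      · obtain rfl := insertRow_eq_append_of_snd_eq_none hins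
        simp [insertTab, insertionRow, hins, fitQ, appendToRow, h, fitQ_of_map_length_eq]
      · have hlen := (mem_and_length_eq_of_insertRow_eq_some hins).2
        simp [insertTab, insertionRow, hins, fitQ, appendToRow, h, hlen, ih w h.2]

theorem rsk_map_range {w : ℕ → ℕ} {m n : ℕ} (hmaps : Set.MapsTo w (Set.Iio m) (Set.Iio n))
    (hinj : Set.InjOn w (Set.Iio m)) :
    rsk ((List.range m).map w) = ((growth w m).tableau n, (recording w n).tableau m) := by
  let step (s : List (List ℕ) × List (List ℕ) × ℕ) (x : ℕ) :=
    (insertTab s.1 x, fitQ s.2.1 (insertTab s.1 x) s.2.2, s.2.2 + 1)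
  suffices h : ((List.range m).map w).foldl step ([], [], 0) =
      ((growth w m).tableau n, (recording w n).tableau m, m) ∧
      ((recording w n).tableau m).map List.length =
        ((growth w m).tableau n).map List.length from
    congrArg (fun s => (s.1, s.2.1)) h.1
  induction m with
  | zero =>
    have hempty : (growth w 0).tableau n = [] := RowWord.tableau_eq_nil fun _ _ => rfl
    simp [hempty, RowWord.tableau]
  | succ m ih =>
    have hsub : Set.Iio m ⊆ Set.Iio (m + 1) := Set.Iio_subset_Iio m.le_succ
    obtain ⟨hfold, hlen⟩ := ih (hmaps.mono_left hsub) (hinj.mono hsub)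
    obtain ⟨hins, hend⟩ := RowWord.insertTab_tableau
      (growth_letter_eq_none hinj m.lt_succ_self) (hmaps (Set.mem_Iio.mpr m.lt_succ_self))
    have hfit := fitQ_insertTab (w m) m hlen
    have hrec : (recording w n).tableau (m + 1) = appendToRow ((recording w n).tableau m)
        (insertionRow ((growth w m).tableau n) (w m)) m := by
      simp only [RowWord.tableau, recording, hend]
    rw [hrec, growth, ← hins]
    simp [List.range_succ, hfold, step, hfit]

/-! ### Standard tableaux and lattice words -/

theorem isChain_iff_getD {α : Type*} {R : α → α → Prop} {d : α} (hd : ∀ a, R a d) (l : List α) :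
    l.IsChain R ↔ ∀ k, R (l.getD k d) (l.getD (k + 1) d) := by
  refine List.isChain_iff_getElem.trans ⟨fun h k => ?_, fun h k hk => ?_⟩
  · by_cases hk : k + 1 < l.length
    · rw [List.getD_eq_getElem _ _ hk, List.getD_eq_getElem _ _ (k.lt_succ_self.trans hk)]
      exact h k hk
    · rw [List.getD_eq_default l d (by omega : l.length ≤ k + 1)]
      exact hd _
  · rw [← List.getD_eq_getElem _ d, ← List.getD_eq_getElem _ d]
    exact h k

theorem eq_of_getD_eq {α : Type*} {d : α} {l l' : List α} (hl : d ∉ l) (hl' : d ∉ l')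
    (h : ∀ k, l.getD k d = l'.getD k d) : l = l' := by
  induction l generalizing l' with
  | nil =>
    cases l' with
    | nil => rfl
    | cons a as => exact absurd (h 0) fun h0 => hl' (by simp_all)
  | cons a as ih =>
    cases l' with
    | nil => exact absurd (h 0) fun h0 => hl (by simp_all)
    | cons b bs =>
      rw [List.mem_cons, not_or] at hl hl'
      exact congrArg₂ List.cons (h 0) (ih hl.2 hl'.2 fun k => h (k + 1))

theorem cons_countP_le_cons_countP_iff {a b : ℕ} {r s : List ℕ} (hs : (b :: s).Pairwise (· < ·))
    (hab : a < b) (j : ℕ) :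
    (b :: s).countP (· < j + 1) ≤ (a :: r).countP (· < j) ↔
      s.countP (· < j + 1) ≤ r.countP (· < j) := by
  rcases lt_or_ge j b with hj | hj
  · have hcount : (b :: s).countP (· < j + 1) = 0 :=
      List.countP_eq_zero.mpr fun x hx => by
        have : b ≤ x :=
          (List.mem_cons.mp hx).elim (·.ge) fun hx => (List.rel_of_pairwise_cons hs hx).le
        simpa using hj.trans_le this
    have hcount' : s.countP (· < j + 1) = 0 :=
      Nat.le_zero.mp (hcount ▸ (List.sublist_cons_self b s).countP_le)
    simp only [hcount, hcount', zero_le]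
  · rw [List.countP_cons_of_pos (by simpa using Nat.lt_succ_of_le hj),
      List.countP_cons_of_pos (by simpa using hab.trans_le hj), Nat.add_le_add_iff_right]

theorem column_lt_iff_countP_le {r s : List ℕ} (hr : r.Pairwise (· < ·)) (hs : s.Pairwise (· < ·)) :
    (s.length ≤ r.length ∧ ∀ j < s.length, r.getD j 0 < s.getD j 0) ↔
      ∀ j, s.countP (· < j + 1) ≤ r.countP (· < j) := by
  induction s generalizing r with
  | nil => simp
  | cons b s ih =>
    cases r with
    | nil => exact iff_of_false (by simp) fun h => absurd (h b) (by simp)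
    | cons a r =>
      have hhead (h : (b :: s).countP (· < b + 1) ≤ (a :: r).countP (· < b)) : a < b := by
        have hpos : 0 < (a :: r).countP (· < b) := h.trans_lt' (by simp)
        obtain ⟨x, hx, hxb⟩ := List.countP_pos_iff.mp hpos
        rcases List.mem_cons.mp hx with rfl | hx
        · simpa using hxb
        · exact (List.rel_of_pairwise_cons hr hx).trans (by simpa using hxb)
      have htail := ih hr.of_cons hs.of_cons
      refine ⟨fun ⟨hlen, hlt⟩ j => ?_, fun h => ?_⟩
      · refine (cons_countP_le_cons_countP_iff hs (hlt 0 (by simp)) j).mpr (htail.mp ⟨?_, ?_⟩ j)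
        · exact Nat.le_of_succ_le_succ hlen
        · exact fun j hj => hlt (j + 1) (Nat.succ_lt_succ hj)
      · have hab := hhead (h b)
        obtain ⟨hlen, hlt⟩ :=
          htail.mpr fun j => (cons_countP_le_cons_countP_iff hs hab j).mp (h j)
        refine ⟨Nat.succ_le_succ hlen, fun j hj => ?_⟩
        cases j with
        | zero => exact hab
        | succ j => exact hlt j (Nat.lt_of_succ_lt_succ hj)

namespace RowWord

theorem pairwise_getD_tableau (r : RowWord) (n k : ℕ) :
    ((r.tableau n).getD k []).Pairwise (· < ·) :=
  r.getD_tableau n k ▸ List.pairwise_lt_range.filter _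

theorem countP_getD_tableau (r : RowWord) (j n k : ℕ) :
    ((r.tableau n).getD k []).countP (· < j) = r.shape (min j n) k := by
  rw [getD_tableau, List.countP_filter]
  induction n with
  | zero => simp [shape]
  | succ n ih =>
    rw [List.range_succ, List.countP_append, ih]
    rcases lt_or_ge n j with hj | hj
    · simp [Nat.succ_le_of_lt hj, hj.le, shape_succ, hj, List.countP_singleton]
    · simp [hj, hj.trans n.le_succ]

theorem length_getD_tableau (r : RowWord) (n k : ℕ) :
    ((r.tableau n).getD k []).length = r.shape n k := by
  rw [getD_tableau, shape, Nat.count, List.countP_eq_length_filter]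

theorem isLattice_iff_isChain_tableau {r : RowWord} {n : ℕ} :
    r.IsLattice n ↔ (r.tableau n).IsChain
      fun r s => s.length ≤ r.length ∧ ∀ j < s.length, r.getD j 0 < s.getD j 0 := by
  rw [isChain_iff_getD (d := []) (by simp)]
  simp only [column_lt_iff_countP_le, pairwise_getD_tableau, countP_getD_tableau]
  refine ⟨fun h k j => ?_, fun h j hj k => ?_⟩
  · have hj := h (min j n) (min_le_right j n) k
    rcases lt_or_ge j n with hjn | hjn
    · have hj' := h (j + 1) hjn k
      rw [min_eq_left hjn.le] at hj ⊢
      rw [min_eq_left (Nat.succ_le_of_lt hjn)]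
      simp only [shape_succ] at hj' ⊢
      grind
    · simpa only [min_eq_right hjn, min_eq_right (hjn.trans j.le_succ)] using hj
  · have := h k j
    rw [min_eq_left hj] at this
    exact le_trans (Nat.count_monotone _ (by omega)) this

theorem le_length_tableau {r : RowWord} {n a : ℕ} (hr : r.IsLattice (n + 1)) (ha : r n = some a) :
    a ≤ (r.tableau n).length := by
  by_contra! hlt
  obtain ⟨b, rfl⟩ := Nat.exists_eq_add_of_lt hlt
  have hbox := hr (n + 1) le_rfl ((r.tableau n).length + b)
  have hempty (k : ℕ) (hk : (r.tableau n).length ≤ k) : r.shape n k = 0 := by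
    rw [← length_getD_tableau, List.getD_eq_default _ _ hk, List.length_nil]
  simp [shape_succ, ha, hempty] at hbox

theorem nil_notMem_tableau {r : RowWord} {n : ℕ} (hr : r.IsLattice n) : [] ∉ r.tableau n := by
  induction n with
  | zero => simp [tableau]
  | succ n ih =>
    have hprev := ih (hr.mono n.le_succ)
    rcases h : r n with _ | a
    · simpa only [tableau, h]
    · simpa only [tableau, h] using nil_notMem_appendToRow n hprev (le_length_tableau hr h)

theorem isSYTList_tableau {r : RowWord} {n : ℕ} (hr : r.IsLattice n) (hsome : ∀ j < n, r j ≠ none) :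
    IsSYTList n (r.tableau n) := by
  refine ⟨fun row hrow => ?_, isLattice_iff_isChain_tableau.mp hr, nil_notMem_tableau hr, ?_⟩
  · obtain ⟨k, hk, rfl⟩ := List.mem_iff_getElem.mp hrow
    rw [← List.getD_eq_getElem _ []]
    exact (r.pairwise_getD_tableau n k).isChain
  · have hall : (List.range n).filter (fun i => (r i).isSome) = List.range n :=
      List.filter_eq_self.mpr fun i hi =>
        Option.isSome_iff_ne_none.mpr (hsome i (List.mem_range.mp hi))
    exact hall ▸ r.flatten_tableau_perm n

theorem tableau_eq_iff {r s : RowWord} {n : ℕ} :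
    r.tableau n = s.tableau n ↔ ∀ j < n, r j = s j := by
  refine ⟨fun h j hj => Option.ext fun k => ?_, tableau_congr⟩
  have hmem : j ∈ (r.tableau n).getD k [] ↔ j ∈ (s.tableau n).getD k [] := by rw [h]
  simpa only [getD_tableau, List.mem_filter, List.mem_range, hj, true_and, decide_eq_true_eq]
    using hmem

end RowWord

theorem mem_flatten_iff_exists_mem_getD {α : Type*} {L : List (List α)} {x : α} :
    x ∈ L.flatten ↔ ∃ k, x ∈ L.getD k [] := by
  rw [List.mem_flatten]
  refine ⟨fun ⟨row, hrow, hx⟩ => ?_, fun ⟨k, hx⟩ => ?_⟩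
  · obtain ⟨k, hk, rfl⟩ := List.mem_iff_getElem.mp hrow
    exact ⟨k, List.getD_eq_getElem L [] hk ▸ hx⟩
  · by_cases hk : k < L.length
    · exact ⟨L[k], L.getElem_mem hk, List.getD_eq_getElem L [] hk ▸ hx⟩
    · rw [List.getD_eq_default _ _ (not_lt.mp hk)] at hx
      exact absurd hx List.not_mem_nil

theorem existsUnique_mem_getD {α : Type*} {L : List (List α)} (hL : L.flatten.Nodup) {x : α}
    (hx : x ∈ L.flatten) : ∃! k, x ∈ L.getD k [] := by
  have hdisj {i j : ℕ} (hij : i < j) : (L.getD i []).Disjoint (L.getD j []) := by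
    by_cases hj : j < L.length
    · rw [List.getD_eq_getElem _ _ hj, List.getD_eq_getElem _ _ (hij.trans hj)]
      exact List.pairwise_iff_getElem.mp (List.nodup_flatten.mp hL).2 i j _ _ hij
    · rw [List.getD_eq_default _ _ (not_lt.mp hj)]
      exact List.disjoint_nil_right _
  obtain ⟨k, hk⟩ := mem_flatten_iff_exists_mem_getD.mp hx
  refine ⟨k, hk, fun i hi => ?_⟩
  rcases lt_trichotomy i k with h | h | h
  · exact (hdisj h hi hk).elim
  · exact h
  · exact (hdisj h hk hi).elim

theorem IsSYTList.exists_tableau_eq {P : List (List ℕ)} {n : ℕ} (hP : IsSYTList n P) :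
    ∃ r : RowWord, r.IsLattice n ∧ (∀ j < n, r j ≠ none) ∧ r.tableau n = P := by
  obtain ⟨hrows, hcols, hnil, hperm⟩ := hP
  have hnodup : P.flatten.Nodup := hperm.nodup_iff.mpr List.nodup_range
  have hentry {x : ℕ} : x ∈ P.flatten ↔ x < n := hperm.mem_iff.trans List.mem_range
  choose! row hmem hrow using fun x (hx : x < n) => existsUnique_mem_getD hnodup (hentry.mpr hx)
  let r : RowWord := fun x => some (row x)
  have hgetD (k : ℕ) : (r.tableau n).getD k [] = P.getD k [] := by
    have hsorted : (P.getD k []).Pairwise (· < ·) := by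
      by_cases hk : k < P.length
      · exact List.getD_eq_getElem P [] hk ▸ (hrows _ (P.getElem_mem hk)).pairwise
      · rw [List.getD_eq_default P [] (not_lt.mp hk)]
        exact .nil
    refine (r.pairwise_getD_tableau n k).eq_of_mem_iff hsorted fun x => ?_
    rw [RowWord.getD_tableau, List.mem_filter, List.mem_range, decide_eq_true_eq, Option.some_inj]
    refine ⟨fun ⟨hx, hk⟩ => hk ▸ hmem x hx, fun hk => ?_⟩
    have hx : x < n := hentry.mp (mem_flatten_iff_exists_mem_getD.mpr ⟨k, hk⟩)
    exact ⟨hx, (hrow x hx k hk).symm⟩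
  have hlattice : r.IsLattice n := by
    rw [RowWord.isLattice_iff_isChain_tableau, isChain_iff_getD (d := []) (by simp)]
    simpa only [hgetD] using (isChain_iff_getD (by simp) P).mp hcols
  exact ⟨r, hlattice, by simp [r], eq_of_getD_eq (RowWord.nil_notMem_tableau hlattice) hnil hgetD⟩

/-! ### Permutations -/

section Permutations

variable {n : ℕ}

/-- The extension of a permutation of `{0, …, n - 1}` to `ℕ` by the identity. -/
def extendToNat (π : Equiv.Perm (Fin n)) : Equiv.Perm ℕ :=
  π.extendDomain Fin.equivSubtype

/-- The row word of the insertion tableau of `π`. -/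
def insertionWord (π : Equiv.Perm (Fin n)) : RowWord :=
  growth (extendToNat π) n

theorem extendToNat_apply (π : Equiv.Perm (Fin n)) (i : Fin n) : extendToNat π i = π i :=
  π.extendDomain_apply_image Fin.equivSubtype i

theorem mapsTo_extendToNat (π : Equiv.Perm (Fin n)) :
    Set.MapsTo (extendToNat π) (Set.Iio n) (Set.Iio n) := fun i hi =>
  (extendToNat_apply π ⟨i, hi⟩).symm ▸ (π ⟨i, hi⟩).isLt

theorem rsk_permWord_eq_growth_recording (π : Equiv.Perm (Fin n)) :
    rsk (permWord π) =
      ((growth (extendToNat π) n).tableau n, (recording (extendToNat π) n).tableau n) := by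
  have hword : permWord π = (List.range n).map (extendToNat π) := by
    simp [permWord, ← List.map_coe_finRange_eq_range, extendToNat_apply]
  rw [hword, rsk_map_range (mapsTo_extendToNat π) (extendToNat π).injective.injOn]

theorem rsk_permWord (π : Equiv.Perm (Fin n)) :
    rsk (permWord π) = ((insertionWord π).tableau n, (insertionWord π⁻¹).tableau n) := by
  have hrec : recording (extendToNat π) n = insertionWord π⁻¹ := funext fun i => by
    rw [recording_eq_growth_inv, insertionWord, extendToNat, extendToNat,
      Equiv.Perm.extendDomain_inv]
  rw [rsk_permWord_eq_growth_recording, hrec]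
  rfl

theorem rsk_permWord_inv (π : Equiv.Perm (Fin n)) :
    rsk (permWord π⁻¹) = (rsk (permWord π)).swap := by
  rw [rsk_permWord, rsk_permWord, inv_inv, Prod.swap]

theorem isSYTList_rsk_permWord_fst (π : Equiv.Perm (Fin n)) :
    IsSYTList n (rsk (permWord π)).1 := by
  rw [rsk_permWord]
  refine RowWord.isSYTList_tableau (RowWord.isLattice_growth _ n n) fun j hj h => ?_
  have hj' := (growth_eq_none_iff _ n j).mp h (π⁻¹ ⟨j, hj⟩) (Fin.isLt _)
  simp [extendToNat_apply] at hj'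

theorem rsk_permWord_injective :
    Function.Injective fun π : Equiv.Perm (Fin n) => rsk (permWord π) := fun π τ h => by
  simp only [rsk_permWord_eq_growth_recording, Prod.mk.injEq, RowWord.tableau_eq_iff] at h
  have hword := growth_recording_injective (mapsTo_extendToNat π)
    (extendToNat π).injective.injOn h.1 h.2
  ext i
  simpa only [extendToNat_apply] using hword i i.isLt

theorem exists_rsk_permWord_eq {P Q : List (List ℕ)} (hP : IsSYTList n P) (hQ : IsSYTList n Q)
    (hshape : P.map List.length = Q.map List.length) :
    ∃ π : Equiv.Perm (Fin n), rsk (permWord π) = (P, Q) := by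
  obtain ⟨r, hr, -, rfl⟩ := hP.exists_tableau_eq
  obtain ⟨s, hs, hs_some, rfl⟩ := hQ.exists_tableau_eq
  have hshape' : r.shape n = s.shape n := funext fun k => by
    rw [← RowWord.length_getD_tableau, ← RowWord.length_getD_tableau,
      ← List.getD_map (f := List.length), hshape, List.getD_map]
  obtain ⟨w, hmaps, hinj, hgrowth, hrec⟩ := exists_growth_eq_recording_eq hr hs hs_some hshape'
  have hinj' : Function.Injective fun i : Fin n => (⟨w i, hmaps i.isLt⟩ : Fin n) :=
    fun i j h => Fin.ext (hinj i.isLt j.isLt (congrArg Fin.val h))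
  let π : Equiv.Perm (Fin n) := .ofBijective _ (Finite.injective_iff_bijective.mp hinj')
  have hπ : ∀ i < n, extendToNat π i = w i := fun i hi => extendToNat_apply π ⟨i, hi⟩
  refine ⟨π, ?_⟩
  rw [rsk_permWord_eq_growth_recording, Prod.mk.injEq, RowWord.tableau_eq_iff,
    RowWord.tableau_eq_iff, growth_congr hπ]
  exact ⟨hgrowth, fun i hi => (recording_congr n fun j hj => hπ j (by omega)).trans (hrec i hi)⟩

end Permutations

/-- Under the Robinson–Schensted correspondence `π ↦ (P(π), Q(π))`:
`π⁻¹ ↦ (Q(π), P(π))`; consequently involutions `π` (i.e. `π² = 1`) have `P(π) = Q(π)`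
and correspond bijectively, via `π ↦ P(π)`, to single standard Young tableaux. -/
theorem RS_inverse_swaps_and_involutions_biject_with_SYT (n : ℕ) :
    (∀ π : Equiv.Perm (Fin n),
        rsk (permWord π⁻¹) = ((rsk (permWord π)).2, (rsk (permWord π)).1)) ∧
    (∀ π : Equiv.Perm (Fin n), π ^ 2 = 1 → (rsk (permWord π)).2 = (rsk (permWord π)).1) ∧
    Set.BijOn (fun π : Equiv.Perm (Fin n) => (rsk (permWord π)).1)
      {π | π ^ 2 = 1} {P | IsSYTList n P} := by
  have hsymm (π : Equiv.Perm (Fin n)) (hπ : π ^ 2 = 1) :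
      (rsk (permWord π)).2 = (rsk (permWord π)).1 := by
    have hinv : π⁻¹ = π := inv_eq_of_mul_eq_one_left (sq π ▸ hπ)
    exact (congrArg Prod.fst (rsk_permWord_inv π)).symm.trans (by rw [hinv])
  refine ⟨rsk_permWord_inv, hsymm, fun π _ => isSYTList_rsk_permWord_fst π,
    fun π hπ τ hτ h => ?_, fun P hP => ?_⟩
  · exact rsk_permWord_injective (Prod.ext h ((hsymm π hπ).trans (h.trans (hsymm τ hτ).symm)))
  · obtain ⟨π, hπ⟩ := exists_rsk_permWord_eq hP hP rfl
    have hinv : π⁻¹ = π := rsk_permWord_injective (by simp only [rsk_permWord_inv, hπ, Prod.swap])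
    have hsq : π ^ 2 = 1 := by rw [sq, mul_eq_one_iff_eq_inv, hinv]
    exact ⟨π, hsq, congrArg Prod.fst hπ⟩
end

section
/- An involution π ∈ S_n has no fixed points if and only if all columns of its Robinson–Schensted shape have even length; more generally, if π² = id and π has exactly k fixed points, then the insertion tableau P has exactly k columns of odd length. -/
/-- The Robinson–Schensted insertion tableau `P(π)`. -/
def rsP {n : ℕ} (π : Equiv.Perm (Fin n)) : List (List ℕ) :=
  (permWord π).foldl insertTab []

/-- The length of the `j`-th column of a tableau given as a list of rows. -/
def colLen (P : List (List ℕ)) (j : ℕ) : ℕ :=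
  (P.filter fun r => j < r.length).length

/-!
Viennot's argument. Follow the first row of the tableau while a partial injection `f` is being
inserted, and let `rank f i j` be the number of its entries below `j` after the times below `i`.
This function obeys a local growth rule which does not distinguish times from values, so passing
from `f` to its inverse transposes it. The values bumped out of the first row form another partial
injection, the skeleton of `f`; it can be read off `rank`, so it commutes with inversion too, and
its tableau is that of `f` without the first row.

If `f` is an involution, then so is its skeleton, and along the diagonal the growth rule says that
the length of the first row is the number of fixed points of `f` plus that of its skeleton.
Putting a first row of length `L` on top of a tableau flips the parity of the first `L` columns,
and induction on the number of rows gives the theorem.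
-/

namespace RobinsonSchensted

section Count

lemma count_add_count_not (p : ℕ → Prop) [DecidablePred p] (n : ℕ) :
    Nat.count p n + Nat.count (fun k => ¬p k) n = n := by
  simp only [Nat.count_eq_card_filter_range, Finset.card_filter_add_card_filter_not,
    Finset.card_range]

lemma count_eq_count_of_le {p : ℕ → Prop} [DecidablePred p] {m n : ℕ} (hmn : m ≤ n)
    (hp : ∀ k, m ≤ k → ¬p k) : Nat.count p n = Nat.count p m := by
  obtain ⟨d, rfl⟩ := Nat.exists_eq_add_of_le hmn
  rw [Nat.count_add, Nat.count_iff_forall_not.2 fun k _ => hp (m + k) (Nat.le_add_right m k),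
    add_zero]

end Count

section Row

variable {r : List ℕ} {v w : ℕ}

/-- The number of entries of the row `r` that are less than `j`. -/
def countLT (r : List ℕ) (j : ℕ) : ℕ :=
  r.countP (· < j)

lemma countLT_eq_length {j : ℕ} (h : ∀ a ∈ r, a < j) : countLT r j = r.length :=
  List.countP_eq_length.2 fun a ha => decide_eq_true (h a ha)

lemma countLT_succ_eq_add_count (r : List ℕ) (j : ℕ) :
    countLT r (j + 1) = countLT r j + r.count j := by
  unfold countLT
  induction r with
  | nil => rfl
  | cons b r ih => grind

lemma countLT_succ (hr : r.Nodup) (j : ℕ) :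
    countLT r (j + 1) = countLT r j + if j ∈ r then 1 else 0 := by
  rw [countLT_succ_eq_add_count, hr.count]

lemma eq_or_mem_of_mem_insertRow {a : ℕ} (h : a ∈ (insertRow r v).1) : a = v ∨ a ∈ r := by
  induction r with
  | nil => simpa [insertRow] using h
  | cons b r ih => grind [insertRow]

lemma pairwise_insertRow (hr : r.Pairwise (· < ·)) (hv : v ∉ r) :
    (insertRow r v).1.Pairwise (· < ·) := by
  induction r with
  | nil => simp [insertRow]
  | cons b r ih =>
    rw [List.pairwise_cons] at hr
    grind [insertRow, List.pairwise_cons, eq_or_mem_of_mem_insertRow]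

lemma snd_insertRow_eq_none_iff : (insertRow r v).2 = none ↔ ∀ a ∈ r, a ≤ v := by
  induction r with
  | nil => simp [insertRow]
  | cons b r ih =>
    rw [List.forall_mem_cons]
    grind [insertRow]

lemma snd_insertRow_eq_some_iff (hr : r.Pairwise (· < ·)) :
    (insertRow r v).2 = some w ↔ w ∈ r ∧ v < w ∧ ∀ a ∈ r, v < a → w ≤ a := by
  induction r with
  | nil => simp [insertRow]
  | cons b r ih =>
    rw [List.pairwise_cons] at hr
    rw [List.forall_mem_cons]
    grind [insertRow]

lemma snd_insertRow_eq_some_iff_mem_notMem (hr : r.Pairwise (· < ·)) (hv : v ∉ r) :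
    (insertRow r v).2 = some w ↔ w ∈ r ∧ w ∉ (insertRow r v).1 := by
  induction r with
  | nil => simp [insertRow]
  | cons b r ih =>
    rw [List.pairwise_cons] at hr
    grind [insertRow]

lemma countLT_insertRow (r : List ℕ) (v j : ℕ) :
    countLT (insertRow r v).1 j =
      countLT r j + if v < j ∧ ∀ w ∈ (insertRow r v).2, j ≤ w then 1 else 0 := by
  unfold countLT
  induction r with
  | nil => simp [insertRow, List.countP_cons]
  | cons b r ih =>
    by_cases h : v < b
    · simp only [insertRow, h, if_true, List.countP_cons, Option.mem_some_iff, forall_eq',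
        decide_eq_true_eq]
      grind
    · simp only [insertRow, h, if_false, List.countP_cons, ih]
      exact Nat.add_right_comm _ _ _

lemma countLT_insertRow_succ (hr : r.Pairwise (· < ·)) (hv : v ∉ r) (j : ℕ) :
    countLT (insertRow r v).1 (j + 1) =
      if v = j then countLT r j + 1
      else max (countLT r (j + 1)) (countLT (insertRow r v).1 j) := by
  rw [countLT_insertRow, countLT_insertRow, countLT_succ hr.nodup]
  cases h : (insertRow r v).2 with
  | none =>
    have le_v := snd_insertRow_eq_none_iff.1 h j
    simp only [Option.not_mem_none, false_implies, implies_true, and_true]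
    grind
  | some w =>
    obtain ⟨hw, hvw, w_le⟩ := (snd_insertRow_eq_some_iff hr).1 h
    simp only [Option.mem_some_iff, forall_eq']
    -- No `j ∈ r` satisfies `v < j < w`, since `w` is the least entry above `v`.
    have w_le_j := w_le j
    grind

end Row

section Tableau

lemma headD_insertTab (P : List (List ℕ)) (v : ℕ) :
    (insertTab P v).headD [] = (insertRow (P.headD []) v).1 := by
  cases P <;> grind [insertTab, insertRow]

lemma tail_insertTab (P : List (List ℕ)) (v : ℕ) :
    (insertTab P v).tail = (insertRow (P.headD []) v).2.elim P.tail (insertTab P.tail) := by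
  cases P <;> grind [insertTab, insertRow]

lemma colLen_eq_colLen_tail_add (P : List (List ℕ)) (j : ℕ) :
    colLen P j = colLen P.tail j + if j < (P.headD []).length then 1 else 0 := by
  cases P <;> grind [colLen]

end Tableau

section PartialInjection

variable (f : ℕ ≃. ℕ)

/-- The word of a partial injection `f` (a permutation matrix with some rows and columns empty):
its values at the times `0, …, n - 1`, where times at which `f` is undefined are skipped. Keeping
these times lets `f` and its skeleton share one clock. -/
def word (n : ℕ) : List ℕ :=
  (List.range n).filterMap f

/-- The insertion tableau of the values of `f` at the times below `n`. -/
def tableau (n : ℕ) : List (List ℕ) :=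
  (word f n).foldl insertTab []

/-- The first row of `tableau f n`, computed without the rows below it. -/
def firstRow (n : ℕ) : List ℕ :=
  (word f n).foldl (fun r v => (insertRow r v).1) []

/-- The value bumped out of the first row at time `i`, if there is one. -/
def bump (i : ℕ) : Option ℕ :=
  (f i).bind fun v => (insertRow (firstRow f i) v).2

/-- The number of entries less than `j` in the first row after the times below `i`. By Schensted's
theorem it is the length of a longest increasing sequence of `f` in `[0, i) × [0, j)`. -/
def rank (i j : ℕ) : ℕ :=
  countLT (firstRow f i) j

lemma word_succ (n : ℕ) : word f (n + 1) = word f n ++ (f n).toList := by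
  cases h : f n <;> simp [word, List.range_succ, h]

lemma tableau_succ (n : ℕ) :
    tableau f (n + 1) = (f n).elim (tableau f n) (insertTab (tableau f n)) := by
  cases h : f n <;> simp [tableau, word_succ, h]

lemma firstRow_succ (n : ℕ) :
    firstRow f (n + 1) = (f n).elim (firstRow f n) fun v => (insertRow (firstRow f n) v).1 := by
  cases h : f n <;> simp [firstRow, word_succ, h]

lemma headD_tableau (n : ℕ) : (tableau f n).headD [] = firstRow f n := by
  induction n with
  | zero => rfl
  | succ n ih =>
    rw [tableau_succ, firstRow_succ]
    cases f n with
    | none => exact ih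
    | some v => simp only [Option.elim_some, headD_insertTab, ih]

variable {f}

lemma exists_lt_of_mem_firstRow {a n : ℕ} (h : a ∈ firstRow f n) : ∃ k < n, f k = some a := by
  induction n with
  | zero => simp [firstRow, word] at h
  | succ n ih =>
    rw [firstRow_succ] at h
    cases hn : f n <;> grind [eq_or_mem_of_mem_insertRow]

lemma notMem_firstRow {i v : ℕ} (h : f i = some v) : v ∉ firstRow f i := by
  intro hv
  obtain ⟨k, hk, hkv⟩ := exists_lt_of_mem_firstRow hv
  exact hk.ne (f.inj hkv h)

variable (f)

lemma pairwise_firstRow (n : ℕ) : (firstRow f n).Pairwise (· < ·) := by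
  induction n with
  | zero => exact List.Pairwise.nil
  | succ n ih =>
    rw [firstRow_succ]
    cases h : f n with
    | none => exact ih
    | some v => exact pairwise_insertRow ih (notMem_firstRow h)

lemma rank_zero_left (j : ℕ) : rank f 0 j = 0 := rfl

lemma rank_zero_right (i : ℕ) : rank f i 0 = 0 := by
  simp [rank, countLT]

lemma rank_succ_right (i j : ℕ) :
    rank f i (j + 1) = rank f i j + if j ∈ firstRow f i then 1 else 0 :=
  countLT_succ (pairwise_firstRow f i).nodup j

theorem rank_succ_succ (i j : ℕ) :
    rank f (i + 1) (j + 1) =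
      if f i = some j then rank f i j + 1 else max (rank f i (j + 1)) (rank f (i + 1) j) := by
  cases h : f i with
  | none => simp [rank, firstRow_succ, h, countLT_succ (pairwise_firstRow f i).nodup]
  | some v =>
    simpa [rank, firstRow_succ, h] using
      countLT_insertRow_succ (pairwise_firstRow f i) (notMem_firstRow h) j

theorem rank_symm (i j : ℕ) : rank f.symm i j = rank f j i := by
  induction i generalizing j with
  | zero => rw [rank_zero_left, rank_zero_right]
  | succ i ihi =>
    induction j with
    | zero => rw [rank_zero_left, rank_zero_right]
    | succ j ihj => simp only [rank_succ_succ, ihi, ihj, f.eq_some_iff, max_comm]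

lemma rank_succ_left (i j : ℕ) :
    rank f (i + 1) j = rank f i j + if i ∈ firstRow f.symm j then 1 else 0 := by
  rw [← rank_symm f j (i + 1), ← rank_symm f j i, rank_succ_right]

variable {f}

lemma bump_eq_some_iff_mem_notMem {i j : ℕ} :
    bump f i = some j ↔ j ∈ firstRow f i ∧ j ∉ firstRow f (i + 1) := by
  rw [bump, firstRow_succ]
  cases h : f i with
  | none => simp
  | some v => exact snd_insertRow_eq_some_iff_mem_notMem (pairwise_firstRow f i) (notMem_firstRow h)

theorem bump_eq_some_iff_rank {i j : ℕ} :
    bump f i = some j ↔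
      rank f i (j + 1) = rank f i j + 1 ∧ rank f (i + 1) j = rank f i j + 1 ∧
        rank f (i + 1) (j + 1) = rank f i j + 1 := by
  have hi := rank_succ_right f i j
  have hi' := rank_succ_right f (i + 1) j
  have hj := rank_succ_left f i j
  have hj' := rank_succ_left f i (j + 1)
  rw [bump_eq_some_iff_mem_notMem]
  -- All sides of this unit square are steps of size at most one, so a bump, being a step on the
  -- side at `i` but not on the side at `i + 1`, forces the values given on the right.
  grind

theorem bump_symm_eq_some_iff {i j : ℕ} : bump f.symm j = some i ↔ bump f i = some j := by
  simp only [bump_eq_some_iff_rank, rank_symm]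
  tauto

variable (f)

/-- Viennot's skeleton of `f`, sending a time to the value bumped out of the first row at that
time; its values at all times form the word which is inserted into the second row. -/
def skeleton : ℕ ≃. ℕ where
  toFun := bump f
  invFun := bump f.symm
  inv _ _ := bump_symm_eq_some_iff

lemma skeleton_apply (i : ℕ) : skeleton f i = bump f i := rfl

lemma skeleton_symm : (skeleton f).symm = skeleton f.symm := rfl

lemma tail_tableau (n : ℕ) : (tableau f n).tail = tableau (skeleton f) n := by
  induction n with
  | zero => rfl
  | succ n ih =>
    rw [tableau_succ, tableau_succ, skeleton_apply, bump]
    cases f n with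
    | none => exact ih
    | some v =>
      simp only [Option.elim_some, Option.bind_some, tail_insertTab, headD_tableau, ih]

theorem rank_skeleton_le (i j : ℕ) : rank (skeleton f) i j ≤ rank f i j := by
  induction i generalizing j with
  | zero => rw [rank_zero_left, rank_zero_left]
  | succ i ihi =>
    induction j with
    | zero => rw [rank_zero_right, rank_zero_right]
    | succ j ihj =>
      rw [rank_succ_succ (skeleton f)]
      split_ifs with h
      · rw [(bump_eq_some_iff_rank.1 h).2.2]
        exact Nat.succ_le_succ (ihi j)
      · refine max_le ((ihi (j + 1)).trans ?_) (ihj.trans ?_)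
        · exact rank_succ_left f i (j + 1) ▸ Nat.le_add_right _ _
        · exact rank_succ_right f (i + 1) j ▸ Nat.le_add_right _ _

lemma length_firstRow_skeleton_le (n : ℕ) :
    (firstRow (skeleton f) n).length ≤ (firstRow f n).length := by
  obtain ⟨m, hm⟩ := (firstRow (skeleton f) n).toFinset.exists_nat_subset_range
  calc (firstRow (skeleton f) n).length
      = rank (skeleton f) n m :=
        (countLT_eq_length fun a ha => Finset.mem_range.1 (hm (List.mem_toFinset.2 ha))).symm
    _ ≤ rank f n m := rank_skeleton_le f n m
    _ ≤ (firstRow f n).length := List.countP_le_length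

variable {f}

lemma lt_of_mem_skeleton {n : ℕ} (hn : ∀ i, ∀ j ∈ f i, j < n) (i j : ℕ) (h : j ∈ skeleton f i) :
    j < n := by
  obtain ⟨k, -, hk⟩ := exists_lt_of_mem_firstRow (bump_eq_some_iff_mem_notMem.1 h).1
  exact hn k j hk

theorem skeleton_induction {motive : (ℕ ≃. ℕ) → Prop} (n : ℕ)
    (nil : ∀ f, tableau f n = [] → motive f) (cons : ∀ f, motive (skeleton f) → motive f)
    (f : ℕ ≃. ℕ) : motive f := by
  induction h : (tableau f n).length generalizing f with
  | zero => exact nil f (List.length_eq_zero_iff.1 h)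
  | succ m ih => exact cons f (ih _ (by rw [← tail_tableau, List.length_tail, h]; rfl))

lemma colLen_tableau_eq_zero {n j : ℕ} (h : (firstRow f n).length ≤ j) :
    colLen (tableau f n) j = 0 := by
  induction f using skeleton_induction n with
  | nil f hf => rw [hf]; rfl
  | cons f ih =>
    rw [colLen_eq_colLen_tail_add, headD_tableau, tail_tableau, if_neg h.not_gt,
      ih ((length_firstRow_skeleton_le f n).trans h)]

lemma count_odd_colLen_add_count_odd_colLen_skeleton (f : ℕ ≃. ℕ) (n : ℕ) :
    Nat.count (fun j => Odd (colLen (tableau f n) j)) (firstRow f n).length +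
        Nat.count (fun j => Odd (colLen (tableau (skeleton f) n) j))
          (firstRow (skeleton f) n).length =
      (firstRow f n).length := by
  have flip : Nat.count (fun j => Odd (colLen (tableau f n) j)) (firstRow f n).length =
      Nat.count (fun j => ¬Odd (colLen (tableau (skeleton f) n) j)) (firstRow f n).length := by
    simp only [Nat.count_eq_card_filter_range]
    refine congrArg Finset.card (Finset.filter_congr fun j hj => ?_)
    rw [colLen_eq_colLen_tail_add, headD_tableau, tail_tableau, if_pos (Finset.mem_range.1 hj),
      Nat.odd_add_one]
  have extend := count_eq_count_of_le (p := fun j => Odd (colLen (tableau (skeleton f) n) j))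
    (length_firstRow_skeleton_le f n) fun j hj => by simp [colLen_tableau_eq_zero hj]
  rw [flip, ← extend, add_comm]
  exact count_add_count_not _ _

end PartialInjection

section Involution

variable {f : ℕ ≃. ℕ}

lemma rank_succ_self (hf : f.symm = f) (n : ℕ) :
    rank f (n + 1) (n + 1) =
      rank f n n + (if f n = some n then 1 else 0) + if skeleton f n = some n then 1 else 0 := by
  have off_diagonal : rank f (n + 1) n = rank f n (n + 1) := by rw [← rank_symm, hf]
  have row_step := rank_succ_right f n n
  have skeleton_fixed : skeleton f n = some n ↔ _ := bump_eq_some_iff_rank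
  rw [rank_succ_succ, off_diagonal, max_self] at skeleton_fixed ⊢
  by_cases fixed : f n = some n
  · rw [if_neg (notMem_firstRow fixed)] at row_step
    simp only [fixed, if_true] at skeleton_fixed ⊢
    grind
  · simp only [fixed, if_false] at skeleton_fixed ⊢
    grind

theorem rank_self (hf : f.symm = f) (n : ℕ) :
    rank f n n =
      Nat.count (fun i => f i = some i) n + Nat.count (fun i => skeleton f i = some i) n := by
  induction n with
  | zero => rfl
  | succ n ih =>
    rw [rank_succ_self hf, ih, Nat.count_succ, Nat.count_succ]
    ring

lemma length_firstRow (hf : f.symm = f) {n : ℕ} (hn : ∀ i, ∀ j ∈ f i, j < n) :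
    (firstRow f n).length =
      Nat.count (fun i => f i = some i) n + Nat.count (fun i => skeleton f i = some i) n := by
  rw [← rank_self hf, rank, countLT_eq_length]
  intro a ha
  obtain ⟨k, -, hk⟩ := exists_lt_of_mem_firstRow ha
  exact hn k a hk

theorem count_odd_colLen_tableau {n : ℕ} (hf : f.symm = f) (hn : ∀ i, ∀ j ∈ f i, j < n) :
    Nat.count (fun j => Odd (colLen (tableau f n) j)) (firstRow f n).length =
      Nat.count (fun i => f i = some i) n := by
  induction f using skeleton_induction n with
  | nil f hnil =>
    have length_eq := length_firstRow hf hn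
    have no_row : (firstRow f n).length = 0 := by rw [← headD_tableau, hnil]; rfl
    rw [no_row, Nat.count_zero]
    omega
  | cons f ih =>
    have length_eq := length_firstRow hf hn
    have parity_flip := count_odd_colLen_add_count_odd_colLen_skeleton f n
    have skeleton_count := ih (by rw [skeleton_symm, hf]) (lt_of_mem_skeleton hn)
    omega

end Involution

section Permutation

variable {n : ℕ} (π : Equiv.Perm (Fin n))

/-- A permutation of `Fin n` as a partial injection of `ℕ`, undefined outside `[0, n)`. -/
def permPEquiv : ℕ ≃. ℕ where
  toFun i := if h : i < n then some (π ⟨i, h⟩ : ℕ) else none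
  invFun j := if h : j < n then some (π.symm ⟨j, h⟩ : ℕ) else none
  inv i j := by
    grind [Option.mem_def, Equiv.symm_apply_apply, Equiv.apply_symm_apply]

lemma permPEquiv_coe (i : Fin n) : permPEquiv π i = some (π i : ℕ) :=
  dif_pos i.isLt

lemma permPEquiv_symm : (permPEquiv π).symm = permPEquiv π.symm := rfl

lemma lt_of_mem_permPEquiv (i j : ℕ) (h : j ∈ permPEquiv π i) : j < n := by
  obtain ⟨_, rfl⟩ : ∃ h : i < n, (π ⟨i, h⟩ : ℕ) = j := by simpa [permPEquiv] using h
  exact Fin.isLt _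

lemma word_permPEquiv : word (permPEquiv π) n = permWord π := by
  rw [word, permWord, ← List.map_coe_finRange_eq_range, List.filterMap_map,
    ← List.filterMap_eq_map]
  congr 1
  exact funext (permPEquiv_coe π)

lemma tableau_permPEquiv : tableau (permPEquiv π) n = rsP π := by
  rw [tableau, word_permPEquiv, rsP]

lemma count_fixed_permPEquiv :
    Nat.count (fun i => permPEquiv π i = some i) n = Fintype.card {i : Fin n // π i = i} := by
  simp only [Nat.count_eq_card_filter_range, Fintype.card_subtype, Finset.card_filter,
    Finset.sum_range, permPEquiv_coe, Option.some_inj, Fin.val_inj]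

end Permutation

end RobinsonSchensted

/-- For an involution `π ∈ S_n` (i.e. `π² = 1`) with exactly `k` fixed points, the
Robinson–Schensted insertion tableau `P(π)` has exactly `k` columns of odd length;
in particular `π` has no fixed points if and only if all columns of the
Robinson–Schensted shape have even length. -/
theorem involution_fixed_points_eq_odd_columns (n : ℕ) (π : Equiv.Perm (Fin n))
    (hinv : π ^ 2 = 1) :
    (((Finset.range ((rsP π).headD []).length).filter
        fun j => Odd (colLen (rsP π) j)).card
      = Fintype.card {i : Fin n // π i = i}) ∧
    ((∀ i, π i ≠ i) ↔ ∀ j < ((rsP π).headD []).length, Even (colLen (rsP π) j)) := by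
  open RobinsonSchensted in
  have symm_eq : (permPEquiv π).symm = permPEquiv π := by
    rw [permPEquiv_symm, ← Equiv.Perm.inv_def, inv_eq_of_mul_eq_one_left (pow_two π ▸ hinv)]
  have odd_columns : (((Finset.range ((rsP π).headD []).length).filter
      fun j => Odd (colLen (rsP π) j)).card = Fintype.card {i : Fin n // π i = i}) := by
    rw [← tableau_permPEquiv, headD_tableau, ← Nat.count_eq_card_filter_range,
      count_odd_colLen_tableau symm_eq (lt_of_mem_permPEquiv π), count_fixed_permPEquiv]
  refine ⟨odd_columns, ?_⟩
  calc (∀ i, π i ≠ i)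
      ↔ Fintype.card {i : Fin n // π i = i} = 0 := by
        rw [Fintype.card_eq_zero_iff, isEmpty_subtype]
    _ ↔ ∀ j < ((rsP π).headD []).length, Even (colLen (rsP π) j) := by
        simp [← odd_columns, Finset.filter_eq_empty_iff]
end

section
/- Gessel's identity (finite form): the number of pairs (P,Q) of standard Young tableaux of the same shape λ ⊢ k with λ_1 ≤ n is given by the U(n) moment formula #{π ∈ S_k : L(π) ≤ n} = C(2k,k)^{-1} ∫_{U(n)} (Tr(M + M̄))^{2k} dM, where dM is normalized Haar measure on the unitary group U(n). -/
open MeasureTheory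

/-- The length of the longest increasing subsequence of `π ∈ S_k`. -/
noncomputable def lis {k : ℕ} (π : Equiv.Perm (Fin k)) : ℕ :=
  sSup {m | ∃ s : Fin m → Fin k, StrictMono s ∧ StrictMono (fun i => π (s i))}

/-!
For the action of `U(n)` on `(ℂⁿ)^{⊗k}` by conjugation with `M^{⊗k}`, the Haar average of the group
action is a projection onto the commutant, so its trace `∫ |Tr M|^{2k} dM` is the dimension of the
commutant. By Schur–Weyl duality the commutant is spanned by the permutations of the tensor factors.
A basis of this span is given by the permutations `π` with `L(π) ≤ n`. Spanning: if `π` increases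
along `n + 1` positions, then antisymmetrizing over these positions kills the tensor power and
rewrites `π` in terms of lexicographically larger permutations. Independence: if `L(π) ≤ n`, the
positions can be coloured with `n` colours so that `π` decreases on each colour class, and the
corresponding matrix entry vanishes at all lexicographically larger permutations. Finally, in the
binomial expansion of `(Tr M + Tr M̄)^{2k}` the terms off the diagonal integrate to zero, because
Haar measure is invariant under `M ↦ zM` for `|z| = 1`.
-/

namespace Gessel

section IncreasingSubsequences

/-- `LisLE f m` says that `f` has no increasing subsequence of length greater than `m`; a
subsequence is encoded by its set of positions. -/
def LisLE {α β : Type*} [Preorder α] [Preorder β] (f : α → β) (m : ℕ) : Prop :=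
  ∀ A : Finset α, StrictMonoOn f A → A.card ≤ m

theorem lis_le_iff_lisLE {k : ℕ} {π : Equiv.Perm (Fin k)} {m : ℕ} : lis π ≤ m ↔ LisLE π m := by
  constructor
  · intro h A hA
    have hbdd : BddAbove {l | ∃ s : Fin l → Fin k, StrictMono s ∧ StrictMono fun i => π (s i)} :=
      ⟨k, fun l ⟨s, hs, _⟩ => by simpa using Fintype.card_le_of_injective s hs.injective⟩
    refine le_trans (le_csSup hbdd ⟨A.orderEmbOfFin rfl, (A.orderEmbOfFin rfl).strictMono, ?_⟩) h
    exact fun i j hij => hA (A.orderEmbOfFin_mem rfl i) (A.orderEmbOfFin_mem rfl j)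
      ((A.orderEmbOfFin rfl).strictMono hij)
  · intro h
    refine csSup_le ⟨0, Fin.elim0, fun i => i.elim0, fun i => i.elim0⟩ ?_
    rintro l ⟨s, hs, hπs⟩
    have hmono : StrictMonoOn π (Finset.univ.map ⟨s, hs.injective⟩ : Finset (Fin k)) := by
      simp only [Finset.coe_map, Function.Embedding.coeFn_mk, Finset.coe_univ, Set.image_univ]
      rintro _ ⟨i, rfl⟩ _ ⟨j, rfl⟩ hij
      exact hπs (hs.lt_iff_lt.mp hij)
    simpa using h _ hmono

theorem exists_strictMono_fin_of_length_lt {α : Type*} [Preorder α] {m : ℕ}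
    (h : ∀ p : LTSeries α, p.length < m) : ∃ c : α → Fin m, StrictMono c := by
  have height_lt (a : α) : Order.height a < (m : ℕ∞) := by
    by_contra! hm
    obtain ⟨p, -, hp⟩ := Order.exists_series_of_le_height a hm
    exact (h p).ne hp
  have coe_toNat (a : α) : ((Order.height a).toNat : ℕ∞) = Order.height a :=
    ENat.natCast_toNat (height_lt a).ne_top
  refine ⟨fun a => ⟨(Order.height a).toNat, ?_⟩, fun a b hab => ?_⟩
  · exact_mod_cast (coe_toNat a).trans_lt (height_lt a)
  · have := Order.height_strictMono hab (height_lt a).lt_top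
    rw [← coe_toNat a, ← coe_toNat b] at this
    exact Nat.cast_lt.mp this

/-- The colour classes of `c` are decreasing subsequences of `f`. -/
theorem LisLE.exists_coloring {α β : Type*} [LinearOrder α] [PartialOrder β] {f : α → β}
    (hf : Function.Injective f) {m : ℕ} (h : LisLE f m) :
    ∃ c : α → Fin m, ∀ i j, i < j → f i < f j → c i < c j := by
  let graph := {p : α × β // f p.1 = p.2}
  have fst_lt {x y : graph} (hxy : x < y) : x.1.1 < y.1.1 ∧ f x.1.1 < f y.1.1 := by
    have hle : x.1.1 ≤ y.1.1 ∧ f x.1.1 ≤ f y.1.1 := by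
      rw [x.2, y.2]; exact hxy.le
    have hne : x.1.1 ≠ y.1.1 := fun he =>
      hxy.ne (Subtype.ext (Prod.ext he (by rw [← x.2, ← y.2, he])))
    exact ⟨hle.1.lt_of_ne hne, hle.2.lt_of_ne (hf.ne hne)⟩
  obtain ⟨c, hc⟩ := exists_strictMono_fin_of_length_lt (α := graph) (m := m) fun p => by
    have hmono : StrictMono fun a => (p a).1.1 := fun a b hab => (fst_lt (p.strictMono hab)).1
    have hA : StrictMonoOn f (Finset.univ.map ⟨_, hmono.injective⟩ : Finset α) := by
      simp only [Finset.coe_map, Function.Embedding.coeFn_mk, Finset.coe_univ, Set.image_univ]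
      rintro _ ⟨a, rfl⟩ _ ⟨b, rfl⟩ hab
      exact (fst_lt (p.strictMono (hmono.lt_iff_lt.mp hab))).2
    simpa using h _ hA
  refine ⟨fun a => c ⟨(a, f a), rfl⟩, fun i j hij hfij => hc ?_⟩
  exact Subtype.coe_lt_coe.mp (Prod.mk_lt_mk.mpr (Or.inl ⟨hij, hfij.le⟩))

end IncreasingSubsequences

section LexicographicOrder

variable {ι : Type*} [LinearOrder ι]

theorem LisLE.exists_forall_toLex_le [Finite ι] {κ : Type*} [Fintype κ] {π : Equiv.Perm ι}
    (h : LisLE π (Fintype.card κ)) :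
    ∃ w : ι → κ, ∀ σ : Equiv.Perm ι, w ∘ σ = w ∘ π → toLex ⇑σ ≤ toLex ⇑π := by
  obtain ⟨c, hc⟩ := h.exists_coloring π.injective
  have hdec {i j : ι} (hij : i < j) (hcij : c i = c j) : π j < π i :=
    (le_of_not_gt fun hπ => (hc i j hij hπ).ne hcij).lt_of_ne (π.injective.ne hij.ne')
  refine ⟨(Fintype.equivFin κ).symm ∘ c ∘ π.symm, fun σ hσ => le_of_not_gt ?_⟩
  rintro ⟨p, heq, hlt⟩
  obtain ⟨q, hq⟩ : ∃ q, π q = σ p := π.surjective (σ p)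
  have hcq : c q = c p := by
    have := congrFun hσ p
    simpa [← hq] using this
  change π p < σ p at hlt
  rcases lt_trichotomy q p with hqp | rfl | hpq
  · have heq' : π q = σ q := heq q hqp
    exact hqp.ne (σ.injective (heq'.symm.trans hq))
  · exact hlt.ne hq
  · exact (hdec hpq hcq.symm).asymm (hq ▸ hlt)

variable [Fintype ι]

theorem toLex_lt_toLex_mul_of_strictMonoOn_support {π σ : Equiv.Perm ι} (hσ : σ ≠ 1)
    (hπ : StrictMonoOn π σ.support) : toLex ⇑π < toLex ⇑(π * σ) := by
  have hne : σ.support.Nonempty := Finset.nonempty_iff_ne_empty.mpr (by simpa using hσ)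
  set t := σ.support.min' hne
  have ht : t ∈ σ.support := σ.support.min'_mem hne
  have hσt : σ t ∈ σ.support := Equiv.Perm.apply_mem_support.mpr ht
  refine ⟨t, fun i hi => ?_, ?_⟩
  · have hi' : σ i = i := Equiv.Perm.notMem_support.mp fun hmem =>
      (σ.support.min'_le i hmem).not_gt hi
    exact (congrArg π hi').symm
  · exact hπ ht hσt ((σ.support.min'_le _ hσt).lt_of_ne (Equiv.Perm.mem_support.mp ht).symm)

end LexicographicOrder

theorem linearIndependent_of_triangular {α V S L : Type*} [LinearOrder L] [Ring S]
    [AddCommGroup V] [Module S V] {v : α → V} {key : α → L} (φ : α → V →ₗ[S] S)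
    (hkey : Function.Injective key) (hdiag : ∀ a, φ a (v a) = 1)
    (htri : ∀ a b, key a < key b → φ a (v b) = 0) : LinearIndependent S v := by
  classical
  rw [linearIndependent_iff']
  intro s g hg
  by_contra! hne
  obtain ⟨a, ha, hmin⟩ := (s.filter (g · ≠ 0)).exists_min_image key
    (by simpa [Finset.Nonempty] using hne)
  obtain ⟨has, hga⟩ := Finset.mem_filter.mp ha
  refine hga ?_
  have hsum : ∑ b ∈ s, g b * φ a (v b) = 0 := by simpa using congrArg (φ a) hg
  rwa [Finset.sum_eq_single_of_mem a has, hdiag, mul_one] at hsum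
  intro b hb hba
  by_cases hgb : g b = 0
  · rw [hgb, zero_mul]
  · have hle : key a ≤ key b := hmin b (Finset.mem_filter.mpr ⟨hb, hgb⟩)
    rw [htri a b (hle.lt_of_ne (hkey.ne hba.symm)), mul_zero]

section PlacePermutations

variable {ι κ R : Type*} [Fintype ι] [DecidableEq ι] [Fintype κ] [DecidableEq κ]

section CommSemiring

variable [CommSemiring R]

/-- The action of `σ` on the tensor power `(R^κ)^{⊗ι}` by permuting the tensor factors, as a
matrix in the standard basis `ι → κ`. -/
def placePerm : Equiv.Perm ι →* Matrix (ι → κ) (ι → κ) R where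
  toFun σ := Equiv.Perm.permMatrix R (σ.symm.arrowCongr (Equiv.refl κ))
  map_one' := Matrix.permMatrix_one
  map_mul' _ _ := by rw [← Matrix.permMatrix_mul]; rfl

theorem placePerm_mul_apply (σ : Equiv.Perm ι) (X : Matrix (ι → κ) (ι → κ) R) (i j : ι → κ) :
    ((placePerm σ : Matrix (ι → κ) (ι → κ) R) * X) i j = X (i ∘ σ) j :=
  congrFun₂ (PEquiv.toMatrix_toPEquiv_mul (σ.symm.arrowCongr (Equiv.refl κ)) X) i j

theorem mul_placePerm_apply (X : Matrix (ι → κ) (ι → κ) R) (σ : Equiv.Perm ι) (i j : ι → κ) :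
    (X * (placePerm σ : Matrix (ι → κ) (ι → κ) R)) i j = X i (j ∘ σ.symm) :=
  congrFun₂ (PEquiv.mul_toMatrix_toPEquiv X (σ.symm.arrowCongr (Equiv.refl κ))) i j

theorem placePerm_apply (σ : Equiv.Perm ι) (i j : ι → κ) :
    (placePerm σ : Matrix (ι → κ) (ι → κ) R) i j = if i ∘ σ = j then 1 else 0 := by
  rw [← mul_one (placePerm σ), placePerm_mul_apply, Matrix.one_apply]

theorem commute_placePerm_iff {σ : Equiv.Perm ι} {X : Matrix (ι → κ) (ι → κ) R} :
    Commute (placePerm σ) X ↔ ∀ i j, X (i ∘ σ) (j ∘ σ) = X i j := by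
  simp only [commute_iff_eq, ← Matrix.ext_iff, placePerm_mul_apply, mul_placePerm_apply]
  refine ⟨fun h i j => ?_, fun h i j => ?_⟩
  · rw [h i (j ∘ σ), Function.comp_assoc, σ.self_comp_symm, Function.comp_id]
  · rw [← h i, Function.comp_assoc, σ.symm_comp_self, Function.comp_id]

end CommSemiring

/-- Two of the positions in `A` carry the same basis vector, and their transposition pairs off the
terms with opposite signs. -/
theorem sum_sign_smul_placePerm_eq_zero [CommRing R] {A : Finset ι}
    (hA : Fintype.card κ < A.card) :
    ∑ σ : Equiv.Perm ι with σ.support ⊆ A,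
      (Equiv.Perm.sign σ : ℤ) • (placePerm σ : Matrix (ι → κ) (ι → κ) R) = 0 := by
  ext i j
  obtain ⟨a, ha, b, hb, hab, hi⟩ :=
    Finset.exists_ne_map_eq_of_card_lt_of_maps_to hA (f := i) (fun _ _ => Finset.mem_univ _)
  have hswap : i ∘ Equiv.swap a b = i := by simp [Equiv.comp_swap_eq_update, hi]
  have hsupp {σ : Equiv.Perm ι} (hσ : σ.support ⊆ A) : (Equiv.swap a b * σ).support ⊆ A :=
    (Equiv.Perm.support_mul_le _ _).trans <| Finset.union_subset
      (by simp [Equiv.Perm.support_swap hab, Finset.insert_subset_iff, ha, hb]) hσ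
  simp only [Matrix.sum_apply, Matrix.smul_apply, Matrix.zero_apply]
  refine Finset.sum_involution (fun σ _ => Equiv.swap a b * σ) (fun σ _ => ?_) (fun σ _ _ h => ?_)
    (fun σ hσ => ?_) (fun σ _ => Equiv.swap_mul_self_mul a b σ)
  · simp only [placePerm_apply, Equiv.Perm.coe_mul, ← Function.comp_assoc, hswap]
    split_ifs <;> simp [Equiv.Perm.sign_swap hab]
  · exact hab (by simpa using h)
  · simpa using hsupp (by simpa using hσ)

end PlacePermutations

section PlacePermutationBasis

variable {ι κ R : Type*} [Fintype ι] [LinearOrder ι] [Fintype κ] [DecidableEq κ] [CommRing R]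

/-- If `π` increases on more than `dim` positions, then antisymmetrizing over these positions
expresses `π` through lexicographically larger permutations. -/
theorem placePerm_mem_span_lisLE (π : Equiv.Perm ι) :
    (placePerm π : Matrix (ι → κ) (ι → κ) R) ∈ Submodule.span R
      (Set.range fun τ : {τ : Equiv.Perm ι // LisLE τ (Fintype.card κ)} => placePerm τ.1) := by
  induction π using (InvImage.wf (fun σ : Equiv.Perm ι => toLex ⇑σ) wellFounded_gt).induction with
  | _ π ih =>
    by_cases hπ : LisLE π (Fintype.card κ)
    · exact Submodule.subset_span ⟨⟨π, hπ⟩, rfl⟩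
    simp only [LisLE, not_forall, not_le] at hπ
    obtain ⟨A, hA, hcard⟩ := hπ
    have hsum := congrArg (placePerm π * ·) (sum_sign_smul_placePerm_eq_zero (R := R) hcard)
    simp only [mul_zero, Finset.mul_sum, mul_smul_comm, ← map_mul] at hsum
    rw [← Finset.add_sum_erase _ _ (Finset.mem_filter.mpr ⟨Finset.mem_univ 1, by simp⟩),
      Equiv.Perm.sign_one, Units.val_one, one_smul, mul_one] at hsum
    rw [eq_neg_of_add_eq_zero_left hsum]
    refine Submodule.neg_mem _ (Submodule.sum_mem _ fun σ hσ => zsmul_mem (ih _ ?_) _)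
    obtain ⟨hσ1, hσA⟩ : σ ≠ 1 ∧ σ.support ⊆ A := by simpa using hσ
    exact toLex_lt_toLex_mul_of_strictMonoOn_support hσ1 (hA.mono (Finset.coe_subset.mpr hσA))

theorem linearIndependent_placePerm_lisLE : LinearIndependent R
    fun π : {π : Equiv.Perm ι // LisLE π (Fintype.card κ)} =>
      (placePerm π.1 : Matrix (ι → κ) (ι → κ) R) := by
  choose w hw using fun π : {π : Equiv.Perm ι // LisLE π (Fintype.card κ)} =>
    π.2.exists_forall_toLex_le (κ := κ)
  refine linearIndependent_of_triangular (key := fun π => toLex ⇑π.1)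
    (fun π => Matrix.entryLinearMap R R (w π) (w π ∘ π.1))
    (fun π σ h => Subtype.ext (Equiv.coe_fn_injective (toLex.injective h)))
    (fun π => ?_) (fun π σ h => ?_)
  · simp [placePerm_apply]
  · simp [placePerm_apply, mt (hw π σ.1) h.not_ge]

theorem finrank_span_range_placePerm [Nontrivial R] :
    Module.finrank R (Submodule.span R
      (Set.range (placePerm : Equiv.Perm ι → Matrix (ι → κ) (ι → κ) R))) =
    Nat.card {π : Equiv.Perm ι // LisLE π (Fintype.card κ)} := by
  classical
  have hspan : Submodule.span R
        (Set.range (placePerm : Equiv.Perm ι → Matrix (ι → κ) (ι → κ) R)) =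
      Submodule.span R
        (Set.range fun π : {π : Equiv.Perm ι // LisLE π (Fintype.card κ)} => placePerm π.1) := by
    refine le_antisymm (Submodule.span_le.mpr ?_) (Submodule.span_mono ?_)
    · rintro _ ⟨π, rfl⟩
      exact placePerm_mem_span_lisLE π
    · rintro _ ⟨π, rfl⟩
      exact ⟨π.1, rfl⟩
  rw [hspan, finrank_span_eq_card linearIndependent_placePerm_lisLE, Nat.card_eq_fintype_card]

end PlacePermutationBasis

section TensorPower

variable {κ R S : Type*} (ι : Type*) [Fintype ι] [DecidableEq ι] [Fintype κ] [DecidableEq κ]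
  [CommSemiring R] [CommSemiring S]

/-- The matrix of `A^{⊗ι}` acting on `(R^κ)^{⊗ι}`, in the standard basis `ι → κ`. -/
def tensorPow : Matrix κ κ R →* Matrix (ι → κ) (ι → κ) R where
  toFun A := Matrix.of fun i j => ∏ s, A (i s) (j s)
  map_one' := by
    ext i j
    simp [Matrix.one_apply, Finset.prod_ite_zero, funext_iff]
  map_mul' A B := by
    ext i j
    simp only [Matrix.of_apply, Matrix.mul_apply, ← Finset.prod_mul_distrib]
    rw [Finset.prod_univ_sum, Fintype.piFinset_univ]

theorem tensorPow_apply (A : Matrix κ κ R) (i j : ι → κ) :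
    tensorPow ι A i j = ∏ s, A (i s) (j s) :=
  rfl

theorem tensorPow_map (f : R →+* S) (A : Matrix κ κ R) :
    tensorPow ι (A.map f) = (tensorPow ι A).map f := by
  ext i j
  simp [tensorPow_apply]

theorem tensorPow_conjTranspose [StarRing R] (A : Matrix κ κ R) :
    tensorPow ι A.conjTranspose = (tensorPow ι A).conjTranspose := by
  ext i j
  simp [tensorPow_apply]

theorem trace_tensorPow (A : Matrix κ κ R) :
    (tensorPow ι A).trace = A.trace ^ Fintype.card ι := by
  simp only [Matrix.trace, Matrix.diag_apply, tensorPow_apply]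
  rw [← Fintype.piFinset_univ, ← Finset.prod_univ_sum (fun _ : ι => Finset.univ) fun _ a => A a a,
    Finset.prod_const, Finset.card_univ]

variable {ι}

theorem commute_placePerm_tensorPow (σ : Equiv.Perm ι) (A : Matrix κ κ R) :
    Commute (placePerm σ) (tensorPow ι A) :=
  commute_placePerm_iff.mpr fun i j => Equiv.prod_comp σ fun s => A (i s) (j s)

end TensorPower

section PolynomialDensity

variable {ι κ σ R : Type*} [Fintype ι] [DecidableEq ι] [Fintype κ] [DecidableEq κ] [CommRing R]
  [IsDomain R]

theorem commute_tensorPow_map_eval {s : σ → Set R} (hs : ∀ a, (s a).Infinite)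
    (A : Matrix κ κ (MvPolynomial σ R)) {T : Matrix (ι → κ) (ι → κ) R}
    (h : ∀ x ∈ Set.univ.pi s, Commute (tensorPow ι (A.map (MvPolynomial.eval x))) T) (x : σ → R) :
    Commute (tensorPow ι (A.map (MvPolynomial.eval x))) T := by
  have hT (x : σ → R) : T = (T.map MvPolynomial.C).map (MvPolynomial.eval x) := by
    ext i j; simp
  have hcomm : tensorPow ι A * T.map MvPolynomial.C = T.map MvPolynomial.C * tensorPow ι A := by
    refine Matrix.ext fun i j => ?_
    refine MvPolynomial.funext_set s hs fun x hx => ?_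
    have := (h x hx).eq
    rw [tensorPow_map, hT x, ← Matrix.map_mul, ← Matrix.map_mul] at this
    exact congrFun₂ this i j
  rw [commute_iff_eq, tensorPow_map, hT x, ← Matrix.map_mul, hcomm, Matrix.map_mul]

end PolynomialDensity

section UnitaryDensity

variable {ι κ : Type*} [Fintype ι] [DecidableEq ι] [Fintype κ] [DecidableEq κ]
  {T : Matrix (ι → κ) (ι → κ) ℂ}

theorem diagonal_mem_unitaryGroup {d : κ → ℂ} (hd : ∀ a, ‖d a‖ = 1) :
    Matrix.diagonal d ∈ Matrix.unitaryGroup κ ℂ := by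
  rw [Matrix.mem_unitaryGroup_iff, Matrix.star_eq_conjTranspose, Matrix.diagonal_conjTranspose,
    Matrix.diagonal_mul_diagonal, ← Matrix.diagonal_one]
  congr 1
  ext a
  simp [Complex.mul_conj, Complex.normSq_eq_norm_sq, hd a]

theorem infinite_unit_sphere : (Metric.sphere (0 : ℂ) 1).Infinite :=
  (isPreconnected_sphere (by simp) 0 1).infinite_of_nontrivial
    ⟨1, by simp, -1, by simp, by norm_num⟩

theorem commute_tensorPow_diagonal
    (h : ∀ U ∈ Matrix.unitaryGroup κ ℂ, Commute (tensorPow ι U) T) (d : κ → ℂ) :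
    Commute (tensorPow ι (Matrix.diagonal d)) T := by
  have heval (x : κ → ℂ) : (Matrix.diagonal (MvPolynomial.X (R := ℂ))).map (MvPolynomial.eval x) =
      Matrix.diagonal x := by
    simp [Matrix.diagonal_map]
  rw [← heval d]
  refine commute_tensorPow_map_eval (fun _ => infinite_unit_sphere) _ (fun x hx => ?_) d
  rw [heval]
  exact h _ (diagonal_mem_unitaryGroup fun a => by simpa using hx a trivial)

theorem commute_tensorPow_of_isHermitian
    (h : ∀ U ∈ Matrix.unitaryGroup κ ℂ, Commute (tensorPow ι U) T) {A : Matrix κ κ ℂ}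
    (hA : A.IsHermitian) : Commute (tensorPow ι A) T := by
  rw [hA.spectral_theorem, Unitary.conjStarAlgAut_apply, map_mul, map_mul]
  exact ((h _ (SetLike.coe_mem _)).mul_left (commute_tensorPow_diagonal h _)).mul_left
    (h _ (star hA.eigenvectorUnitary).2)

/-- Writing `A = X + I • Y` with `X`, `Y` Hermitian, the matrices `X + c • Y` with `c` real
are Hermitian. -/
theorem commute_tensorPow_of_forall_mem_unitaryGroup
    (h : ∀ U ∈ Matrix.unitaryGroup κ ℂ, Commute (tensorPow ι U) T) (A : Matrix κ κ ℂ) :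
    Commute (tensorPow ι A) T := by
  let X := realPart A
  let Y := imaginaryPart A
  let P : Matrix κ κ (MvPolynomial Unit ℂ) :=
    X.1.map MvPolynomial.C + MvPolynomial.X (R := ℂ) () • Y.1.map MvPolynomial.C
  have heval (c : Unit → ℂ) : P.map (MvPolynomial.eval c) = X.1 + c () • Y.1 := by
    ext i j
    simp [P]
  have hA : A = P.map (MvPolynomial.eval fun _ => Complex.I) := by
    rw [heval]
    exact (realPart_add_I_smul_imaginaryPart A).symm
  rw [hA]
  refine commute_tensorPow_map_eval (s := fun _ => Set.range ((↑) : ℝ → ℂ))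
    (fun _ => Set.infinite_range_of_injective Complex.ofReal_injective) _ (fun c hc => ?_) _
  obtain ⟨r, hr⟩ := hc () trivial
  rw [heval, ← hr]
  exact commute_tensorPow_of_isHermitian h (X + r • Y).2

end UnitaryDensity

section SymmetricTensors

variable {ι : Type*} [Fintype ι]

theorem exists_perm_comp_eq_of_sum_single_eq {E : Type*} {a b : ι → E}
    (h : (∑ s, Finsupp.single (a s) 1 : E →₀ ℕ) = ∑ s, Finsupp.single (b s) 1) :
    ∃ σ : Equiv.Perm ι, a ∘ σ = b := by
  classical
  have hcard (e : E) : Fintype.card {s // b s = e} = Fintype.card {s // a s = e} := by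
    have := DFunLike.congr_fun h e
    simp only [Finsupp.finsetSum_apply, Finsupp.single_apply, Finset.sum_boole,
      Nat.cast_id] at this
    rw [Fintype.card_subtype, Fintype.card_subtype, this]
  exact ⟨Equiv.ofFiberEquiv fun e => Fintype.equivOfCardEq (hcard e),
    funext fun s => Equiv.ofFiberEquiv_map _ s⟩

/-- A functional vanishing on all powers `A^{⊗ι}` is a polynomial in `A` that vanishes identically;
its coefficients determine the functional on symmetric tensors. -/
theorem mem_span_range_prod_of_comp_perm_eq {E K : Type*} [Finite E] [Field K] [Infinite K]
    {X : (ι → E) → K} (hX : ∀ (σ : Equiv.Perm ι) a, X (a ∘ σ) = X a) :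
    X ∈ Submodule.span K (Set.range fun (A : E → K) (a : ι → E) => ∏ s, A (a s)) := by
  classical
  have := Fintype.ofFinite E
  by_contra hmem
  obtain ⟨φ, hφX, hφ⟩ := Submodule.exists_le_ker_of_notMem hmem
  let c (a : ι → E) : K := φ fun b => if a = b then 1 else 0
  have hφ_apply (Y : (ι → E) → K) : φ Y = ∑ a, c a * Y a := by
    simp only [LinearMap.pi_apply_eq_sum_univ φ Y, smul_eq_mul, mul_comm, c]
  let m (a : ι → E) : E →₀ ℕ := ∑ s, Finsupp.single (a s) 1
  have heval (A : E → K) (a : ι → E) :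
      MvPolynomial.eval A (MvPolynomial.monomial (m a) 1) = ∏ s, A (a s) := by
    simp [m, MvPolynomial.monomial_sum_one, MvPolynomial.eval_monomial]
  have hpoly : ∑ a, c a • MvPolynomial.basisMonomials E K (m a) = 0 := by
    refine MvPolynomial.funext fun A => ?_
    have : φ (fun a => ∏ s, A (a s)) = 0 := hφ (Submodule.subset_span ⟨A, rfl⟩)
    simpa [heval, hφ_apply] using this
  have hfac : X.FactorsThrough m := fun a b hab => by
    obtain ⟨σ, rfl⟩ := exists_perm_comp_eq_of_sum_single_eq hab
    exact (hX σ a).symm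
  have hcoeff := congrArg
    ((MvPolynomial.basisMonomials E K).constr K (Function.extend m X 0)) hpoly
  simp only [map_sum, map_smul, Module.Basis.constr_basis, hfac.extend_apply, map_zero,
    smul_eq_mul] at hcoeff
  exact hφX ((hφ_apply X).trans hcoeff)

theorem mem_span_range_tensorPow_of_commute_placePerm {κ K : Type*} [Fintype κ] [DecidableEq ι]
    [DecidableEq κ] [Field K] [Infinite K] {X : Matrix (ι → κ) (ι → κ) K}
    (hX : ∀ σ : Equiv.Perm ι, Commute (placePerm σ) X) :
    X ∈ Submodule.span K (Set.range (tensorPow ι : Matrix κ κ K → Matrix (ι → κ) (ι → κ) K)) := by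
  let split : ((ι → κ × κ) → K) →ₗ[K] Matrix (ι → κ) (ι → κ) K :=
    { toFun := fun Y => Matrix.of fun i j => Y fun s => (i s, j s)
      map_add' := fun _ _ => rfl
      map_smul' := fun _ _ => rfl }
  have hsymm := mem_span_range_prod_of_comp_perm_eq
    (X := fun a : ι → κ × κ => X (Prod.fst ∘ a) (Prod.snd ∘ a))
    fun σ a => commute_placePerm_iff.mp (hX σ) (Prod.fst ∘ a) (Prod.snd ∘ a)
  refine Submodule.span_mono ?_ (Submodule.apply_mem_span_image_of_mem_span split hsymm)
  rintro _ ⟨_, ⟨A, rfl⟩, rfl⟩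
  exact ⟨Matrix.of fun a b => A (a, b), rfl⟩

end SymmetricTensors

section DoubleCentralizer

theorem centralizer_centralizer_of_isSemisimpleRing {R V : Type*} [CommRing R] [AddCommGroup V]
    [Module R V] [Module.Finite R V] (A : Subalgebra R (Module.End R V)) [IsSemisimpleRing A] :
    Subalgebra.centralizer R (Subalgebra.centralizer R (A : Set (Module.End R V))) = A := by
  refine le_antisymm (fun T hT => ?_) Set.subset_centralizer_centralizer
  let T' : Module.End (Module.End A V) V :=
    { T with
      map_smul' := fun f v =>
        have hf : (f.restrictScalars R : Module.End R V) ∈ Subalgebra.centralizer R A :=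
          fun a ha => LinearMap.ext fun v => (f.map_smul (⟨a, ha⟩ : A) v).symm
        (LinearMap.congr_fun (Subalgebra.mem_centralizer_iff R |>.mp hT _ hf) v).symm }
  obtain ⟨s, hs⟩ := Module.Finite.fg_top (R := R) (M := V)
  obtain ⟨a, ha⟩ := jacobson_density T' s
  have : T = a := LinearMap.ext_on hs fun v hv => ha v hv
  exact this ▸ a.2

theorem mem_span_range_of_forall_commute {G I K : Type*} [Group G] [Finite G] [Fintype I]
    [DecidableEq I] [Field K] [NeZero (Nat.card G : K)] (ρ : G →* Matrix I I K) {T : Matrix I I K}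
    (hT : ∀ X, (∀ g, Commute (ρ g) X) → Commute T X) :
    T ∈ Submodule.span K (Set.range ρ) := by
  let e := Matrix.toLinAlgEquiv' (R := K) (n := I)
  let f := e.toAlgHom.comp (MonoidAlgebra.lift K (Matrix I I K) G ρ)
  have : IsSemisimpleRing f.range :=
    f.rangeRestrict.toRingHom.isSemisimpleRing_of_surjective f.rangeRestrict_surjective
  have hmem : e T ∈ f.range := by
    rw [← centralizer_centralizer_of_isSemisimpleRing f.range]
    intro X hX
    have hρX (g : G) : Commute (ρ g) (e.symm X) := by
      have hg : f (MonoidAlgebra.single g 1) = e (ρ g) := by simp [f]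
      rw [← e.apply_symm_apply X] at hX
      exact e.injective (by simpa only [map_mul] using hX _ ⟨MonoidAlgebra.single g 1, hg⟩)
    simpa using congrArg e (hT _ hρX).eq.symm
  obtain ⟨a, ha⟩ := hmem
  have hT_eq : MonoidAlgebra.lift K (Matrix I I K) G ρ a = T := e.injective ha
  rw [← hT_eq, MonoidAlgebra.lift_apply]
  exact Submodule.sum_mem _ fun g _ => Submodule.smul_mem _ _ (Submodule.subset_span ⟨g, rfl⟩)

end DoubleCentralizer

section SchurWeyl

theorem commute_of_mem_span {R A : Type*} [CommSemiring R] [Semiring A] [Algebra R A] {s : Set A}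
    {x y : A} (hx : x ∈ Submodule.span R s) (h : ∀ a ∈ s, Commute a y) : Commute x y := by
  have hle : Submodule.span R s ≤ (Subalgebra.centralizer R {y}).toSubmodule :=
    Submodule.span_le.mpr fun a ha => by
      rintro _ rfl
      exact (h a ha).symm
  exact (hle hx y rfl).symm

variable {ι κ : Type*} [Fintype ι] [DecidableEq ι] [Fintype κ] [DecidableEq κ]
  {T : Matrix (ι → κ) (ι → κ) ℂ}

/-- Schur–Weyl duality. -/
theorem mem_span_range_placePerm_iff :
    T ∈ Submodule.span ℂ (Set.range (placePerm : Equiv.Perm ι → Matrix (ι → κ) (ι → κ) ℂ)) ↔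
      ∀ U ∈ Matrix.unitaryGroup κ ℂ, Commute (tensorPow ι U) T := by
  refine ⟨fun hT U _ => ?_, fun h => ?_⟩
  · refine (commute_of_mem_span hT ?_).symm
    rintro _ ⟨σ, rfl⟩
    exact commute_placePerm_tensorPow σ U
  · refine mem_span_range_of_forall_commute placePerm fun X hX => ?_
    refine (commute_of_mem_span (mem_span_range_tensorPow_of_commute_placePerm hX) ?_).symm
    rintro _ ⟨A, rfl⟩
    exact commute_tensorPow_of_forall_mem_unitaryGroup h A

end SchurWeyl

section HaarAverage

theorem integrable_of_continuous {X E : Type*} [TopologicalSpace X] [CompactSpace X]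
    [MeasurableSpace X] [OpensMeasurableSpace X] [NormedAddCommGroup E] {f : X → E}
    (hf : Continuous f) (μ : Measure X) [IsFiniteMeasureOnCompacts μ] : Integrable f μ :=
  hf.integrable_of_hasCompactSupport (HasCompactSupport.of_compactSpace f)

variable {G V : Type*} [Group G] [TopologicalSpace G] [CompactSpace G] [MeasurableSpace G]
  [NormedAddCommGroup V] [NormedSpace ℂ V] {ρ : Representation ℂ G V}

section Average

variable [OpensMeasurableSpace G] (hρ : ∀ v, Continuous fun g => ρ g v) (μ : Measure G)
  [IsFiniteMeasureOnCompacts μ]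

/-- The average `v ↦ ∫ ρ(g) v dμ(g)` of a continuous representation of a compact group. -/
noncomputable def haarAverage : V →ₗ[ℂ] V where
  toFun v := ∫ g, ρ g v ∂μ
  map_add' v w := by
    simp only [map_add]
    exact integral_add (integrable_of_continuous (hρ v) μ) (integrable_of_continuous (hρ w) μ)
  map_smul' c v := by
    simp only [map_smul]
    exact integral_smul c _

variable [FiniteDimensional ℂ V]

theorem map_haarAverage {W : Type*} [NormedAddCommGroup W] [NormedSpace ℂ W] [CompleteSpace W]
    (f : V →ₗ[ℂ] W) (v : V) : f (haarAverage hρ μ v) = ∫ g, f (ρ g v) ∂μ :=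
  have := FiniteDimensional.complete ℂ V
  (f.toContinuousLinearMap.integral_comp_comm (integrable_of_continuous (hρ v) μ)).symm

theorem trace_haarAverage :
    LinearMap.trace ℂ V (haarAverage hρ μ) = ∫ g, ρ.character g ∂μ := by
  let b := Module.finBasis ℂ V
  have htrace (f : V →ₗ[ℂ] V) : LinearMap.trace ℂ V f = ∑ i, b.coord i (f (b i)) := by
    simp [LinearMap.trace_eq_matrix_trace ℂ b, Matrix.trace, LinearMap.toMatrix_apply]
  simp only [Representation.character, htrace, map_haarAverage]
  refine (integral_finsetSum _ fun i _ => integrable_of_continuous ?_ μ).symm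
  exact (b.coord i).continuous_of_finiteDimensional.comp (hρ (b i))

end Average

variable [BorelSpace G] [ContinuousMul G] [FiniteDimensional ℂ V]
  (hρ : ∀ v, Continuous fun g => ρ g v) (μ : Measure G) [μ.IsMulLeftInvariant]
  [IsProbabilityMeasure μ]

theorem isProj_haarAverage : LinearMap.IsProj ρ.invariants (haarAverage hρ μ) where
  map_mem v h := by
    rw [map_haarAverage]
    simp only [← Module.End.mul_apply, ← map_mul]
    exact integral_mul_left_eq_self (fun g => ρ g v) h
  map_id v hv := by
    have hinv (g : G) : ρ g v = v := hv g
    have := FiniteDimensional.complete ℂ V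
    simp [haarAverage, hinv]

theorem integral_character_eq_finrank_invariants (hρ : ∀ v, Continuous fun g => ρ g v) :
    ∫ g, ρ.character g ∂μ = Module.finrank ℂ ρ.invariants := by
  rw [← trace_haarAverage hρ, (isProj_haarAverage hρ μ).trace]

end HaarAverage

section UnitaryCharacter

variable {I : Type*} [Fintype I]

theorem trace_mulLeftRight {R : Type*} [CommRing R] (A B : Matrix I I R) :
    LinearMap.trace R _ (LinearMap.mulLeftRight R (A, B)) = A.trace * B.trace := by
  classical
  have hentry (i j : I) : (A * Matrix.single i j (1 : R) * B) i j = A i i * B j j := by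
    rw [mul_assoc, Matrix.mul_apply, Finset.sum_eq_single i]
    · simp
    · intro a _ ha
      simp [ha]
    · simp
  have htrace (f : Matrix I I R →ₗ[R] Matrix I I R) :
      LinearMap.trace R _ f = ∑ i, ∑ j, f (Matrix.single i j 1) i j := by
    rw [LinearMap.trace_eq_matrix_trace R (Matrix.stdBasis R I I), Matrix.trace,
      Fintype.sum_prod_type]
    simp only [Matrix.diag_apply, LinearMap.toMatrix_apply, Matrix.stdBasis_eq_single]
    rfl
  simp only [htrace, LinearMap.mulLeftRight_apply, hentry, Matrix.trace, Finset.sum_mul_sum,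
    Matrix.diag_apply]

variable [DecidableEq I] {G : Type*} [Group G] (ρ : G →* Matrix.unitaryGroup I ℂ)

/-- The representation `g ↦ (X ↦ ρ(g) X ρ(g)⋆)` on matrices. -/
def conjRepresentation : Representation ℂ G (Matrix I I ℂ) where
  toFun g := LinearMap.mulLeftRight ℂ ((ρ g : Matrix I I ℂ), star (ρ g : Matrix I I ℂ))
  map_one' := LinearMap.ext fun X => by simp
  map_mul' g h := LinearMap.ext fun X => by simp [mul_assoc]

theorem conjRepresentation_apply (g : G) (X : Matrix I I ℂ) :
    conjRepresentation ρ g X = ρ g * X * star (ρ g : Matrix I I ℂ) :=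
  rfl

theorem character_conjRepresentation (g : G) :
    (conjRepresentation ρ).character g =
      (ρ g : Matrix I I ℂ).trace * (starRingEnd ℂ) (ρ g : Matrix I I ℂ).trace := by
  refine (trace_mulLeftRight _ _).trans ?_
  rw [Matrix.star_eq_conjTranspose, Matrix.trace_conjTranspose]
  rfl

theorem mem_invariants_conjRepresentation {X : Matrix I I ℂ} :
    X ∈ (conjRepresentation ρ).invariants ↔ ∀ g, Commute (ρ g : Matrix I I ℂ) X :=
  forall_congr' fun g => (commute_unitary_iff_star_right_conjugate (ρ g).2).symm

open scoped Matrix.Norms.L2Operator in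
theorem integral_trace_mul_conj_trace [TopologicalSpace G] [CompactSpace G] [ContinuousMul G]
    [MeasurableSpace G] [BorelSpace G] (μ : Measure G) [μ.IsMulLeftInvariant]
    [IsProbabilityMeasure μ] (hρ : Continuous ρ) :
    ∫ g, (ρ g : Matrix I I ℂ).trace * (starRingEnd ℂ) (ρ g : Matrix I I ℂ).trace ∂μ =
      Module.finrank ℂ (conjRepresentation ρ).invariants := by
  simp only [← character_conjRepresentation]
  refine integral_character_eq_finrank_invariants μ fun X => ?_
  simp only [conjRepresentation_apply]
  fun_prop

end UnitaryCharacter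

theorem exists_norm_eq_one_and_pow_mul_conj_pow_eq_neg_one {a b : ℕ} (hab : a ≠ b) :
    ∃ z : ℂ, ‖z‖ = 1 ∧ z ^ a * (starRingEnd ℂ) z ^ b = -1 := by
  let θ : ℝ := Real.pi / (a - b)
  have hθ : (a - b) * θ = Real.pi := mul_div_cancel₀ _ (sub_ne_zero.mpr (Nat.cast_injective.ne hab))
  refine ⟨Complex.exp (θ * Complex.I), Complex.norm_exp_ofReal_mul_I θ, ?_⟩
  rw [← Complex.exp_conj, ← Complex.exp_nat_mul, ← Complex.exp_nat_mul, ← Complex.exp_add,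
    ← Complex.exp_pi_mul_I, ← hθ]
  congr 1
  simp only [map_mul, Complex.conj_ofReal, Complex.conj_I]
  push_cast
  ring

section UnitaryMoments

variable {κ : Type*} [Fintype κ] [DecidableEq κ]

open scoped Matrix.Norms.L2Operator in
instance : CompactSpace (Matrix.unitaryGroup κ ℂ) := by
  have := FiniteDimensional.proper ℂ (Matrix κ κ ℂ)
  have hnorm (U : Matrix κ κ ℂ) (hU : U ∈ unitary (Matrix κ κ ℂ)) :
      ‖U‖ ≤ ‖(1 : Matrix κ κ ℂ)‖ := by
    simpa using (CStarRing.norm_mul_mem_unitary 1 hU).le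
  exact isCompact_iff_compactSpace.mp (Metric.isCompact_of_isClosed_isBounded isClosed_unitary
    (isBounded_iff_forall_norm_le.mpr ⟨_, hnorm⟩))

/-- The representation of the unitary group on `(ℂ^κ)^{⊗ι}`. -/
def unitaryTensorPow (ι κ : Type*) [Fintype ι] [DecidableEq ι] [Fintype κ] [DecidableEq κ] :
    Matrix.unitaryGroup κ ℂ →* Matrix.unitaryGroup (ι → κ) ℂ :=
  (Unitary.map ⟨tensorPow ι, tensorPow_conjTranspose ι⟩).toMonoidHom

theorem coe_unitaryTensorPow (ι : Type*) [Fintype ι] [DecidableEq ι] (U : Matrix.unitaryGroup κ ℂ) :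
    (unitaryTensorPow ι κ U : Matrix (ι → κ) (ι → κ) ℂ) = tensorPow ι (U : Matrix κ κ ℂ) :=
  rfl

theorem continuous_unitaryTensorPow (ι : Type*) [Fintype ι] [DecidableEq ι] :
    Continuous (unitaryTensorPow ι κ) := by
  refine Continuous.subtype_mk (continuous_matrix fun i j => ?_) _
  exact continuous_finsetProd _ fun s _ => continuous_subtype_val.matrix_elem (i s) (j s)

theorem invariants_conjRepresentation_unitaryTensorPow (ι : Type*) [Fintype ι] [DecidableEq ι] :
    (conjRepresentation (unitaryTensorPow ι κ)).invariants =
      Submodule.span ℂ (Set.range (placePerm : Equiv.Perm ι → Matrix (ι → κ) (ι → κ) ℂ)) := by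
  ext X
  rw [mem_invariants_conjRepresentation, mem_span_range_placePerm_iff, Subtype.forall]
  rfl

variable [MeasurableSpace (Matrix.unitaryGroup κ ℂ)] [BorelSpace (Matrix.unitaryGroup κ ℂ)]
  (μ : Measure (Matrix.unitaryGroup κ ℂ))

theorem integrable_trace_pow_mul_conj_trace_pow [IsFiniteMeasureOnCompacts μ] (a b : ℕ) :
    Integrable (fun U : Matrix.unitaryGroup κ ℂ => (U : Matrix κ κ ℂ).trace ^ a *
      (starRingEnd ℂ) (U : Matrix κ κ ℂ).trace ^ b) μ := by
  refine integrable_of_continuous ?_ μ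
  have : Continuous fun U : Matrix.unitaryGroup κ ℂ => (U : Matrix κ κ ℂ).trace :=
    continuous_subtype_val.matrix_trace
  fun_prop

variable [μ.IsMulLeftInvariant]

theorem integral_trace_pow_mul_conj_trace_pow_of_ne {a b : ℕ} (hab : a ≠ b) :
    ∫ U : Matrix.unitaryGroup κ ℂ, (U : Matrix κ κ ℂ).trace ^ a *
      (starRingEnd ℂ) (U : Matrix κ κ ℂ).trace ^ b ∂μ = 0 := by
  obtain ⟨z, hz, hzab⟩ := exists_norm_eq_one_and_pow_mul_conj_pow_eq_neg_one hab
  let Z : Matrix.unitaryGroup κ ℂ :=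
    ⟨Matrix.diagonal fun _ => z, diagonal_mem_unitaryGroup fun _ => hz⟩
  refine integral_eq_zero_of_mul_left_eq_neg (g := Z) fun U => ?_
  have hZU : (↑(Z * U) : Matrix κ κ ℂ) = z • (U : Matrix κ κ ℂ) :=
    (Matrix.smul_eq_diagonal_mul _ _).symm
  rw [hZU, Matrix.trace_smul, smul_eq_mul, map_mul, mul_pow, mul_pow, mul_mul_mul_comm, hzab,
    neg_one_mul]

variable [IsProbabilityMeasure μ]

theorem integral_trace_pow_mul_conj_trace_pow (k : ℕ) :
    ∫ U : Matrix.unitaryGroup κ ℂ, (U : Matrix κ κ ℂ).trace ^ k *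
      (starRingEnd ℂ) (U : Matrix κ κ ℂ).trace ^ k ∂μ =
      Nat.card {π : Equiv.Perm (Fin k) // LisLE π (Fintype.card κ)} := by
  rw [← finrank_span_range_placePerm (R := ℂ) (κ := κ),
    ← invariants_conjRepresentation_unitaryTensorPow,
    ← integral_trace_mul_conj_trace _ μ (continuous_unitaryTensorPow (Fin k))]
  simp only [coe_unitaryTensorPow, trace_tensorPow, Fintype.card_fin, map_pow]

theorem integral_trace_add_conj_trace_pow (k : ℕ) :
    ∫ U : Matrix.unitaryGroup κ ℂ,
      ((U : Matrix κ κ ℂ).trace + (starRingEnd ℂ) (U : Matrix κ κ ℂ).trace) ^ (2 * k) ∂μ =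
      (2 * k).choose k * Nat.card {π : Equiv.Perm (Fin k) // LisLE π (Fintype.card κ)} := by
  simp only [add_pow]
  rw [integral_finsetSum _ fun m _ =>
    (integrable_trace_pow_mul_conj_trace_pow μ m (2 * k - m)).mul_const _]
  simp only [integral_mul_const]
  rw [Finset.sum_eq_single_of_mem k (by simp; omega) fun m _ hm => by
    rw [integral_trace_pow_mul_conj_trace_pow_of_ne μ (by omega), zero_mul]]
  rw [two_mul, Nat.add_sub_cancel, integral_trace_pow_mul_conj_trace_pow, mul_comm]

end UnitaryMoments

end Gessel

/-- Gessel's identity (finite form): the number of permutations `π ∈ S_k` with longest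
increasing subsequence of length at most `n` (equivalently, of pairs of same-shape
standard Young tableaux with `k` boxes and at most `n` columns) is given by
`C(2k,k)⁻¹ ∫_{U(n)} (Tr(M + M̄))^{2k} dM`, `dM` normalized Haar measure on `U(n)`. -/
theorem card_lis_le_eq_unitary_moment (n k : ℕ)
    [MeasurableSpace (Matrix.unitaryGroup (Fin n) ℂ)]
    [BorelSpace (Matrix.unitaryGroup (Fin n) ℂ)]
    (μ : Measure (Matrix.unitaryGroup (Fin n) ℂ))
    [μ.IsHaarMeasure] [IsProbabilityMeasure μ] :
    (Nat.card {π : Equiv.Perm (Fin k) // lis π ≤ n} : ℂ) =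
      ((Nat.choose (2 * k) k : ℂ))⁻¹ *
        ∫ M : Matrix.unitaryGroup (Fin n) ℂ,
          (Matrix.trace (M : Matrix (Fin n) (Fin n) ℂ) +
            (starRingEnd ℂ) (Matrix.trace (M : Matrix (Fin n) (Fin n) ℂ))) ^ (2 * k) ∂μ := by
  have hchoose : ((2 * k).choose k : ℂ) ≠ 0 :=
    Nat.cast_ne_zero.mpr (Nat.choose_pos (Nat.le_mul_of_pos_left k two_pos)).ne'
  rw [eq_inv_mul_iff_mul_eq₀ hchoose, Gessel.integral_trace_add_conj_trace_pow]
  simp only [Gessel.lis_le_iff_lisLE, Fintype.card_fin]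
end
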